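/- arXiv:1708.00832 — 2 statements merged into one kernel-verified Lean document; each statement's English description precedes it below -/
import Mathlib

section
/- Let T = {1243, 1342, 3412} (patterns of length 4). Then the generating function for T-avoiders satisfies, as formal power series over ℚ, (1-x)·(1-2x)·(1-3x)·(1-3x+x^2)^2·F_T(x) = 1 - 11x + 48x^2 - 104x^3 + 115x^4 - 61x^5 + 13x^6; that is, F_T(x) = (1-11x+48x^2-104x^3+115x^4-61x^5+13x^6)/((1-x)(1-2x)(1-3x)(1-3x+x^2)^2). -/
open PowerSeries

/-- A permutation `π` of `{0,…,n-1}` contains the pattern `σ` (of length `k`) if there is an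
order-embedding of positions on which the values of `π` appear in the same relative order as
the values of `σ`. -/
def ContainsPattern {n k : ℕ} (π : Equiv.Perm (Fin n)) (σ : Fin k → Fin k) : Prop :=
  ∃ f : Fin k ↪o Fin n, ∀ a b : Fin k, σ a < σ b ↔ π (f a) < π (f b)

/-- The number of permutations of length `n` avoiding every pattern in `T`. -/
noncomputable def avoiderCount (T : Set (Fin 4 → Fin 4)) (n : ℕ) : ℕ :=
  Nat.card {π : Equiv.Perm (Fin n) // ∀ σ ∈ T, ¬ ContainsPattern π σ}

/-- The generating function `F_T(x) = ∑_n |S_n(T)| xⁿ` over `ℚ`. -/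
noncomputable def avoiderGF (T : Set (Fin 4 → Fin 4)) : PowerSeries ℚ :=
  PowerSeries.mk fun n => (avoiderCount T n : ℚ)

/-- The generating function of the Catalan numbers over `ℚ`. -/
noncomputable def catalanGF : PowerSeries ℚ :=
  PowerSeries.mk fun n => (catalan n : ℚ)

/-!
An avoider is built by prepending first entries one at a time. The sites (values at which an entry
may be prepended without creating a pattern) carry labels recording which sites survive later
insertions, so the word of labels from top to bottom determines the subtree of extensions. From
the second level on, the words fall into four families with two parameters each, and the resulting
linear system for the generating functions of the subtrees is solved in closed form by combinations
of powers of `y = 1 / (1 - x)` and `z = (1 - x) / (1 - 2x)`.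
-/

namespace GeneratingTree

section Patterns

variable {n k : ℕ}

lemma containsPattern_iff_strictMono {σ τ : Fin k → Fin k} (π : Equiv.Perm (Fin n))
    (hστ : Function.LeftInverse σ τ) (hτσ : Function.LeftInverse τ σ) :
    ContainsPattern π σ ↔ ∃ f : Fin k ↪o Fin n, StrictMono fun a => π (f (τ a)) := by
  refine exists_congr fun f => ⟨fun h a b hab => ?_, fun h a b => ?_⟩
  · rwa [← h, hστ, hστ]
  · simpa only [hτσ _] using h.lt_iff_lt (a := σ a) (b := σ b) |>.symm

lemma exists_orderEmbedding_fin_four {p : (Fin 4 → Fin n) → Prop} :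
    (∃ f : Fin 4 ↪o Fin n, p f) ↔
      ∃ i j k l : Fin n, i < j ∧ j < k ∧ k < l ∧ p ![i, j, k, l] := by
  constructor
  · rintro ⟨f, hf⟩
    refine ⟨f 0, f 1, f 2, f 3, by simp, by simp, by simp, ?_⟩
    convert hf using 1
    ext a
    fin_cases a <;> rfl
  · rintro ⟨i, j, k, l, hij, hjk, hkl, h⟩
    have hmono : StrictMono ![i, j, k, l] := by
      simp [Fin.strictMono_iff_lt_succ, Fin.forall_fin_succ, hij, hjk, hkl]
    exact ⟨OrderEmbedding.ofStrictMono _ hmono, h⟩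

lemma containsPattern_iff_exists_lt {σ τ : Fin 4 → Fin 4} (π : Equiv.Perm (Fin n))
    (hστ : Function.LeftInverse σ τ) (hτσ : Function.LeftInverse τ σ) :
    ContainsPattern π σ ↔ ∃ i j k l : Fin n, i < j ∧ j < k ∧ k < l ∧
      π (![i, j, k, l] (τ 0)) < π (![i, j, k, l] (τ 1)) ∧
      π (![i, j, k, l] (τ 1)) < π (![i, j, k, l] (τ 2)) ∧
      π (![i, j, k, l] (τ 2)) < π (![i, j, k, l] (τ 3)) := by
  rw [containsPattern_iff_strictMono π hστ hτσ,
    exists_orderEmbedding_fin_four (p := fun f => StrictMono fun a => π (f (τ a)))]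
  simp [Fin.strictMono_iff_lt_succ, Fin.forall_fin_succ]

/-- Avoidance of `1243`, `1342` and `3412`. The first two patterns are merged: a smallest entry
followed by a larger peak. -/
def Avoids (π : Equiv.Perm (Fin n)) : Prop :=
  (¬ ∃ i j k l, i < j ∧ j < k ∧ k < l ∧ π i < π j ∧ π i < π l ∧ π j < π k ∧ π l < π k) ∧
    ¬ ∃ i j k l, i < j ∧ j < k ∧ k < l ∧ π k < π l ∧ π l < π i ∧ π i < π j

lemma avoids_iff (π : Equiv.Perm (Fin n)) :
    Avoids π ↔ ∀ σ ∈ ({![0, 1, 3, 2], ![0, 2, 3, 1], ![2, 3, 0, 1]} : Set (Fin 4 → Fin 4)),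
      ¬ ContainsPattern π σ := by
  have h1243 := containsPattern_iff_exists_lt π
    (σ := ![0, 1, 3, 2]) (τ := ![0, 1, 3, 2]) (by decide) (by decide)
  have h1342 := containsPattern_iff_exists_lt π
    (σ := ![0, 2, 3, 1]) (τ := ![0, 3, 1, 2]) (by decide) (by decide)
  have h3412 := containsPattern_iff_exists_lt π
    (σ := ![2, 3, 0, 1]) (τ := ![2, 3, 0, 1]) (by decide) (by decide)
  have hpeak : (∃ i j k l, i < j ∧ j < k ∧ k < l ∧ π i < π j ∧ π i < π l ∧ π j < π k ∧ π l < π k) ↔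
      ContainsPattern π ![0, 1, 3, 2] ∨ ContainsPattern π ![0, 2, 3, 1] := by
    rw [h1243, h1342]
    constructor
    · rintro ⟨i, j, k, l, hij, hjk, hkl, hπij, hπil, hπjk, hπlk⟩
      have hne : π j ≠ π l := π.injective.ne (hjk.trans hkl).ne
      rcases hne.lt_or_gt with hjl | hlj
      · exact .inl ⟨i, j, k, l, hij, hjk, hkl, hπij, hjl, hπlk⟩
      · exact .inr ⟨i, j, k, l, hij, hjk, hkl, hπil, hlj, hπjk⟩
    · rintro (⟨i, j, k, l, hij, hjk, hkl, h₁, h₂, h₃⟩ | ⟨i, j, k, l, hij, hjk, hkl, h₁, h₂, h₃⟩)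
      · exact ⟨i, j, k, l, hij, hjk, hkl, h₁, h₁.trans h₂, h₂.trans h₃, h₃⟩
      · exact ⟨i, j, k, l, hij, hjk, hkl, h₁.trans h₂, h₁, h₃, h₂.trans h₃⟩
  simp only [Set.mem_insert_iff, Set.mem_singleton_iff, forall_eq_or_imp, forall_eq, Avoids, hpeak,
    not_or, and_assoc]
  exact and_congr_right fun _ => and_congr_right fun _ => not_congr h3412.symm

end Patterns

section Prepend

variable {n : ℕ}

/-- The permutation with first entry `v` whose remaining entries are order-isomorphic to `π`. -/
def prepend (v : Fin (n + 1)) (π : Equiv.Perm (Fin n)) : Equiv.Perm (Fin (n + 1)) :=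
  (Equiv.Perm.decomposeFin.symm (0, π)).trans v.cycleRange.symm

@[simp]
lemma prepend_zero (v : Fin (n + 1)) (π : Equiv.Perm (Fin n)) : prepend v π 0 = v := by
  simp [prepend]

@[simp]
lemma prepend_succ (v : Fin (n + 1)) (π : Equiv.Perm (Fin n)) (i : Fin n) :
    prepend v π i.succ = v.succAbove (π i) := by
  simp [prepend]

lemma prepend_bijective :
    Function.Bijective fun x : Equiv.Perm (Fin n) × Fin (n + 1) => prepend x.2 x.1 := by
  rw [Fintype.bijective_iff_injective_and_card]
  refine ⟨?_, by simp [Fintype.card_perm, Nat.factorial_succ, mul_comm]⟩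
  rintro ⟨π, v⟩ ⟨ρ, w⟩ h
  obtain rfl : v = w := by simpa using Equiv.congr_fun h 0
  have hπρ : π = ρ := Equiv.ext fun i => by simpa using Equiv.congr_fun h i.succ
  rw [hπρ]

section Shift

variable {v w : Fin (n + 1)} (a : Fin n)

lemma lt_succAbove_iff_of_le (h : v ≤ w) : w < v.succAbove a ↔ w ≤ a.castSucc := by
  grind [Fin.succAbove]

lemma succAbove_le_iff_of_le (h : v ≤ w) : v.succAbove a ≤ w ↔ a.castSucc < w := by
  grind [Fin.succAbove]

lemma le_succAbove_iff_of_ge (h : w ≤ v) : w ≤ v.succAbove a ↔ w ≤ a.castSucc := by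
  grind [Fin.succAbove]

lemma succAbove_lt_iff_of_ge (h : w ≤ v) : v.succAbove a < w ↔ a.castSucc < w := by
  grind [Fin.succAbove]

end Shift

lemma succ_or_castSucc (v : Fin (n + 1)) (w : Fin (n + 2)) :
    (∃ u, v ≤ u ∧ w = u.succ) ∨ ∃ u, u ≤ v ∧ w = u.castSucc := by
  rcases lt_or_ge v.castSucc w with h | h
  · exact .inl ⟨w.pred (by grind), by grind, by grind⟩
  · exact .inr ⟨w.castLT (by grind), by grind, by grind⟩

end Prepend

section Sites

variable {n : ℕ} (π : Equiv.Perm (Fin n)) {u v w : Fin (n + 1)}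

/-- A site `w` is a candidate value for a new first entry of `π`; the entries `π i` that end up
above it are those with `w ≤ (π i).castSucc`. `HasPeak π w` says that three of them rise and then
fall, so that prepending `w` would create a `1243` or a `1342`. -/
def HasPeak (w : Fin (n + 1)) : Prop :=
  ∃ i j k, i < j ∧ j < k ∧ w ≤ (π i).castSucc ∧ w ≤ (π k).castSucc ∧ π i < π j ∧ π k < π j

/-- An entry above the site `w` followed by an ascent below it: prepending `w` would create
a `3412`. -/
def HasStraddle (w : Fin (n + 1)) : Prop :=
  ∃ i j k, i < j ∧ j < k ∧ π j < π k ∧ (π k).castSucc < w ∧ w ≤ (π i).castSucc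

/-- The sites at which a new first entry can be prepended to an avoider. -/
def Active (w : Fin (n + 1)) : Prop := ¬ HasPeak π w ∧ ¬ HasStraddle π w

/-- The entries below the site `w` are not decreasing. -/
def HasAscent (w : Fin (n + 1)) : Prop :=
  ∃ i j, i < j ∧ π i < π j ∧ (π j).castSucc < w

/-- Some inversion has its larger entry above the site `v` and its smaller one above `w`. -/
def HasInversion (v w : Fin (n + 1)) : Prop :=
  ∃ j k, j < k ∧ w ≤ (π k).castSucc ∧ v ≤ (π j).castSucc ∧ π k < π j

/-- For an active site `w ≤ v`: whether `w` stays active, below the new entry, once `v` has been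
prepended. -/
def Survives (v w : Fin (n + 1)) : Prop := ¬ HasAscent π w ∧ ¬ HasInversion π v w

lemma avoids_prepend (v : Fin (n + 1)) : Avoids (prepend v π) ↔ Avoids π ∧ Active π v := by
  set ρ := prepend v π with hρ
  have hpeak : (∃ i j k l, i < j ∧ j < k ∧ k < l ∧ ρ i < ρ j ∧ ρ i < ρ l ∧ ρ j < ρ k ∧ ρ l < ρ k) ↔
      HasPeak π v ∨ ∃ i j k l, i < j ∧ j < k ∧ k < l ∧
        π i < π j ∧ π i < π l ∧ π j < π k ∧ π l < π k := by
    simp [hρ, HasPeak, Fin.exists_fin_succ, Fin.lt_succAbove_iff_le_castSucc]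
  have hstraddle : (∃ i j k l, i < j ∧ j < k ∧ k < l ∧ ρ k < ρ l ∧ ρ l < ρ i ∧ ρ i < ρ j) ↔
      HasStraddle π v ∨ ∃ i j k l, i < j ∧ j < k ∧ k < l ∧ π k < π l ∧ π l < π i ∧ π i < π j := by
    simp [hρ, HasStraddle, Fin.exists_fin_succ, Fin.lt_succAbove_iff_le_castSucc,
      Fin.succAbove_lt_iff_castSucc_lt]
  rw [Avoids, hpeak, hstraddle, not_or, not_or, and_and_and_comm, and_comm]
  rfl

lemma hasPeak_prepend_succ (h : v ≤ w) : HasPeak (prepend v π) w.succ ↔ HasPeak π w := by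
  simp [HasPeak, Fin.exists_fin_succ, lt_succAbove_iff_of_le _ h, h.not_gt]

lemma hasStraddle_prepend_succ (h : v ≤ w) :
    HasStraddle (prepend v π) w.succ ↔ HasStraddle π w := by
  simp [HasStraddle, Fin.exists_fin_succ, lt_succAbove_iff_of_le _ h, succAbove_le_iff_of_le _ h,
    h.not_gt]

lemma active_prepend_succ (h : v ≤ w) : Active (prepend v π) w.succ ↔ Active π w := by
  rw [Active, Active, hasPeak_prepend_succ π h, hasStraddle_prepend_succ π h]

variable {π} in
lemma exists_le_castSucc_lt (h : v < w) : ∃ i, v ≤ (π i).castSucc ∧ (π i).castSucc < w :=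
  ⟨π.symm (v.castLT (by grind)), by simpa⟩

lemma hasAscent_prepend_succ (h : v ≤ w) :
    HasAscent (prepend v π) w.succ ↔ v < w ∨ HasAscent π w := by
  have hexists : (∃ i, v ≤ (π i).castSucc ∧ (π i).castSucc < w) ↔ v < w :=
    ⟨fun ⟨_, hv, hw⟩ => hv.trans_lt hw, exists_le_castSucc_lt⟩
  simp [HasAscent, Fin.exists_fin_succ, succAbove_le_iff_of_le _ h,
    Fin.lt_succAbove_iff_le_castSucc, hexists]

lemma hasInversion_prepend_succ_succ (hu : v ≤ u) (hw : v ≤ w) :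
    HasInversion (prepend v π) u.succ w.succ ↔ HasInversion π u w := by
  simp [HasInversion, Fin.exists_fin_succ, lt_succAbove_iff_of_le _ hu,
    lt_succAbove_iff_of_le _ hw, hu.not_gt]

lemma hasInversion_prepend_succ_castSucc (hu : v ≤ u) (hw : w ≤ v) :
    HasInversion (prepend v π) u.succ w.castSucc ↔ HasInversion π u w := by
  simp [HasInversion, Fin.exists_fin_succ, lt_succAbove_iff_of_le _ hu,
    le_succAbove_iff_of_ge _ hw, hu.not_gt]

lemma hasPeak_prepend_castSucc (h : w ≤ v) :
    HasPeak (prepend v π) w.castSucc ↔ HasInversion π v w ∨ HasPeak π w := by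
  simp [HasPeak, HasInversion, Fin.exists_fin_succ, le_succAbove_iff_of_ge _ h, h,
    Fin.lt_succAbove_iff_le_castSucc]

variable {π} in
lemma HasStraddle.hasAscent (h : HasStraddle π w) : HasAscent π w :=
  let ⟨_, j, k, _, hjk, hπ, hw, _⟩ := h
  ⟨j, k, hjk, hπ, hw⟩

lemma hasStraddle_prepend_castSucc (h : w ≤ v) :
    HasStraddle (prepend v π) w.castSucc ↔ HasAscent π w := by
  have hor : HasStraddle (prepend v π) w.castSucc ↔ HasAscent π w ∨ HasStraddle π w := by
    simp [HasStraddle, HasAscent, Fin.exists_fin_succ, le_succAbove_iff_of_ge _ h,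
      succAbove_lt_iff_of_ge _ h, h]
  rw [hor, or_iff_left_of_imp HasStraddle.hasAscent]

lemma active_prepend_castSucc (h : w ≤ v) :
    Active (prepend v π) w.castSucc ↔ Active π w ∧ Survives π v w := by
  rw [Active, Active, Survives, hasPeak_prepend_castSucc π h, hasStraddle_prepend_castSucc π h]
  have := HasStraddle.hasAscent (π := π) (w := w)
  tauto

lemma hasAscent_prepend_castSucc (h : w ≤ v) :
    HasAscent (prepend v π) w.castSucc ↔ HasAscent π w := by
  have hempty (a : Fin n) : ¬ (v ≤ a.castSucc ∧ a.castSucc < w) := fun ⟨hv, hw⟩ =>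
    (hv.trans_lt hw).not_ge h
  simp [HasAscent, Fin.exists_fin_succ, succAbove_lt_iff_of_ge _ h,
    Fin.lt_succAbove_iff_le_castSucc, hempty]

lemma hasInversion_prepend_castSucc_castSucc (hu : u ≤ v) (hw : w ≤ v) :
    HasInversion (prepend v π) u.castSucc w.castSucc ↔ w < v ∨ HasInversion π u w := by
  have hexists : (∃ i, w ≤ (π i).castSucc ∧ (π i).castSucc < v) ↔ w < v :=
    ⟨fun ⟨_, hw, hv⟩ => hw.trans_lt hv, exists_le_castSucc_lt⟩
  simp [HasInversion, Fin.exists_fin_succ, le_succAbove_iff_of_ge _ hu,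
    le_succAbove_iff_of_ge _ hw, hu, Fin.succAbove_lt_iff_castSucc_lt, hexists]

lemma survives_prepend_succ_succ (hu : v ≤ u) (hw : v ≤ w) :
    Survives (prepend v π) u.succ w.succ ↔ w = v ∧ Survives π u v := by
  rw [Survives, Survives, hasAscent_prepend_succ π hw, hasInversion_prepend_succ_succ π hu hw]
  rcases hw.eq_or_lt with rfl | hlt
  · simp
  · simp [hlt, hlt.ne']

lemma survives_prepend_succ_castSucc (hu : v ≤ u) (hw : w ≤ v) :
    Survives (prepend v π) u.succ w.castSucc ↔ Survives π u w := by
  rw [Survives, Survives, hasAscent_prepend_castSucc π hw,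
    hasInversion_prepend_succ_castSucc π hu hw]

lemma survives_prepend_castSucc_castSucc (hu : u ≤ v) (hw : w ≤ v) :
    Survives (prepend v π) u.castSucc w.castSucc ↔ w = v ∧ Survives π u v := by
  rw [Survives, Survives, hasAscent_prepend_castSucc π hw,
    hasInversion_prepend_castSucc_castSucc π hu hw]
  rcases hw.eq_or_lt with rfl | hlt
  · simp
  · simp [hlt, hlt.ne]

end Sites

section Labels

/-- What the generating tree has to remember about an active site `v`. Prepending `v` keeps an
active site `w ≤ v` active if the entries below `w` are decreasing (`free`), if `w = v` (`edge`),
or never (`blocked`). The flag `low` records whether the entries below `v` are decreasing; for an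
`edge` they are. -/
inductive Label
  | free (low : Bool)
  | edge
  | blocked (low : Bool)

namespace Label

/-- Whether the entries below the labelled site are decreasing. -/
def low : Label → Bool
  | free b => b
  | edge => true
  | blocked b => b

/-- The new label of a site above the prepended entry. -/
def lift : Label → Label
  | free _ => free false
  | edge => blocked false
  | blocked _ => blocked false

/-- The label of the site immediately above the prepended entry, given the label of the site at
which that entry was prepended. -/
def split : Label → Label
  | free b => free b
  | edge => free true
  | blocked b => blocked b

/-- The labels of the active sites below an entry prepended at a site labelled `ℓ`, where `D` lists
the labels of the active sites below that site. -/
def survivors : Label → List Label → List Label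
  | free b, D => (if b then [edge] else []) ++ (D.filter low).map fun _ => blocked true
  | edge, _ => [edge]
  | blocked _, _ => []

end Label

variable {n : ℕ} {π : Equiv.Perm (Fin n)} {v w : Fin (n + 1)} {ℓ : Label}

/-- The condition under which an active site `w ≤ v` survives when `v` carries the given label. -/
def Label.Keeps (π : Equiv.Perm (Fin n)) (v w : Fin (n + 1)) : Label → Prop
  | free _ => ¬ HasAscent π w
  | edge => w = v
  | blocked _ => False

/-- The label `ℓ` describes the site `v` of `π` correctly. -/
structure IsLabel (π : Equiv.Perm (Fin n)) (v : Fin (n + 1)) (ℓ : Label) : Prop where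
  low_iff : ℓ.low = true ↔ ¬ HasAscent π v
  survives_iff : ∀ w ≤ v, Active π w → (Survives π v w ↔ ℓ.Keeps π v w)

lemma IsLabel.prepend_succ_of_lt (h : IsLabel π w ℓ) (hvw : v < w) (hv : Active π v) :
    IsLabel (prepend v π) w.succ ℓ.lift where
  low_iff := by
    rw [hasAscent_prepend_succ π hvw.le]
    cases ℓ <;> simp [Label.lift, Label.low, hvw]
  survives_iff t _ ht := by
    obtain ⟨u, hvu, rfl⟩ | ⟨u, huv, rfl⟩ := succ_or_castSucc v t
    · rw [survives_prepend_succ_succ π hvw.le hvu, h.survives_iff v hvw.le hv]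
      rcases hvu.eq_or_lt with rfl | hlt
      · cases ℓ <;> simp [Label.lift, Label.Keeps, hasAscent_prepend_succ, hvw.ne]
      · cases ℓ <;> simp [Label.lift, Label.Keeps, hasAscent_prepend_succ π hvu, hlt, hlt.ne']
    · have hu := ((active_prepend_castSucc π huv).1 ht).1
      rw [survives_prepend_succ_castSucc π hvw.le huv,
        h.survives_iff u (huv.trans hvw.le) hu]
      cases ℓ <;>
        simp [Label.lift, Label.Keeps, hasAscent_prepend_castSucc π huv, (huv.trans_lt hvw).ne]

lemma IsLabel.prepend_succ_self (h : IsLabel π v ℓ) (hv : Active π v) :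
    IsLabel (prepend v π) v.succ ℓ.split where
  low_iff := by
    have hlow := h.low_iff
    rw [hasAscent_prepend_succ π le_rfl]
    cases ℓ <;> simpa [Label.split, Label.low] using hlow
  survives_iff t htv ht := by
    obtain ⟨u, hvu, rfl⟩ | ⟨u, huv, rfl⟩ := succ_or_castSucc v t
    · obtain rfl : u = v := le_antisymm (by simpa using htv) hvu
      have hself := h.survives_iff u le_rfl hv
      have hlow := h.low_iff
      rw [survives_prepend_succ_succ π hvu hvu]
      cases ℓ <;> simp_all [Label.split, Label.Keeps, hasAscent_prepend_succ, Label.low]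
    · obtain ⟨hu, hsurv⟩ := (active_prepend_castSucc π huv).1 ht
      have hdecr : ¬ HasAscent (prepend v π) u.castSucc :=
        (hasAscent_prepend_castSucc π huv).not.2 hsurv.1
      have hkeeps := (h.survives_iff u huv hu).1 hsurv
      simp only [survives_prepend_succ_castSucc π le_rfl huv, hsurv, true_iff]
      cases ℓ with
      | free => exact hdecr
      | edge => exact hdecr
      | blocked => exact hkeeps.elim

lemma isLabel_prepend_castSucc_self (h : Survives π v v) :
    IsLabel (prepend v π) v.castSucc .edge where
  low_iff := by simp [Label.low, hasAscent_prepend_castSucc, h.1]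
  survives_iff t htv _ := by
    obtain ⟨u, hvu, rfl⟩ | ⟨u, huv, rfl⟩ := succ_or_castSucc v t
    · grind
    · simp [survives_prepend_castSucc_castSucc π le_rfl huv, h, Label.Keeps]

lemma isLabel_prepend_castSucc_of_lt (hwv : w < v) (h : Survives π v w) :
    IsLabel (prepend v π) w.castSucc (.blocked true) where
  low_iff := by simp [Label.low, hasAscent_prepend_castSucc π hwv.le, h.1]
  survives_iff t htw _ := by
    obtain ⟨u, hvu, rfl⟩ | ⟨u, huv, rfl⟩ := succ_or_castSucc v t
    · grind
    · have huw : u ≤ w := by simpa using htw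
      simp [survives_prepend_castSucc_castSucc π hwv.le huv, (huw.trans_lt hwv).ne, Label.Keeps]

end Labels

section Labellings

variable {n : ℕ} {π : Equiv.Perm (Fin n)} {U D l : List (Fin (n + 1) × Label)}
  {c : Fin (n + 1) × Label}

/-- `l` lists the active sites of `π` in decreasing order, together with their labels. -/
structure IsLabelling (π : Equiv.Perm (Fin n)) (l : List (Fin (n + 1) × Label)) : Prop where
  sorted : (l.map Prod.fst).Pairwise (· > ·)
  active_iff : ∀ w, Active π w ↔ w ∈ l.map Prod.fst
  isLabel : ∀ a ∈ l, IsLabel π a.1 a.2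

/-- The succession rule on words of labels: prepending at a site labelled `c`, where `U` and `D` are
the labels of the active sites above and below it. -/
def update (U : List Label) (c : Label) (D : List Label) : List Label :=
  U.map Label.lift ++ c.split :: c.survivors D

open Classical in
/-- The sites below an entry prepended at `v` that remain active, with their new labels, where `D`
lists the labelled active sites below `v`. -/
noncomputable def siteSurvivors (π : Equiv.Perm (Fin n)) (v : Fin (n + 1))
    (D : List (Fin (n + 1) × Label)) : List (Fin (n + 1) × Label) :=
  ((v, .edge) :: D.map fun a => (a.1, .blocked true)).filter fun a => Survives π v a.1

/-- The succession rule `update` on labelled sites. -/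
noncomputable def siteUpdate (π : Equiv.Perm (Fin n)) (U : List (Fin (n + 1) × Label))
    (c : Fin (n + 1) × Label) (D : List (Fin (n + 1) × Label)) : List (Fin (n + 2) × Label) :=
  U.map (Prod.map Fin.succ Label.lift) ++ (c.1.succ, c.2.split) ::
    (siteSurvivors π c.1 D).map (Prod.map Fin.castSucc id)

open Classical in
lemma map_fst_siteSurvivors (v : Fin (n + 1)) : (siteSurvivors π v D).map Prod.fst =
    (v :: D.map Prod.fst).filter fun w => Survives π v w := by
  have hsites : v :: D.map Prod.fst =
      ((v, Label.edge) :: D.map fun a => (a.1, .blocked true)).map Prod.fst := by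
    simp
  rw [hsites, List.filter_map]
  rfl

lemma map_fst_siteUpdate : (siteUpdate π U c D).map Prod.fst =
    (U.map Prod.fst ++ [c.1]).map Fin.succ ++
      ((siteSurvivors π c.1 D).map Prod.fst).map Fin.castSucc := by
  simp [siteUpdate, Function.comp_def]

namespace IsLabelling

variable {a : Fin (n + 1) × Label}

lemma active_of_mem (h : IsLabelling π l) (ha : a ∈ l) : Active π a.1 :=
  (h.active_iff _).2 (List.mem_map_of_mem ha)

lemma lt_of_mem_left (h : IsLabelling π (U ++ c :: D)) (ha : a ∈ U) : c.1 < a.1 := by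
  have hsorted := h.sorted
  rw [List.map_append, List.pairwise_append] at hsorted
  exact hsorted.2.2 _ (List.mem_map_of_mem ha) _ (by simp)

lemma lt_of_mem_right (h : IsLabelling π (U ++ c :: D)) (ha : a ∈ D) : a.1 < c.1 := by
  have hsorted := h.sorted
  rw [List.map_append, List.pairwise_append, List.map_cons, List.pairwise_cons] at hsorted
  exact hsorted.2.1.1 _ (List.mem_map_of_mem ha)

lemma le_of_mem_left (h : IsLabelling π (U ++ c :: D)) {w : Fin (n + 1)}
    (hw : w ∈ U.map Prod.fst ++ [c.1]) : c.1 ≤ w := by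
  simp only [List.mem_append, List.mem_map, List.mem_singleton] at hw
  obtain ⟨a, ha, rfl⟩ | rfl := hw
  exacts [(h.lt_of_mem_left ha).le, le_rfl]

lemma le_of_mem_right (h : IsLabelling π (U ++ c :: D)) {w : Fin (n + 1)}
    (hw : w ∈ c.1 :: D.map Prod.fst) : w ≤ c.1 := by
  simp only [List.mem_cons, List.mem_map] at hw
  obtain rfl | ⟨a, ha, rfl⟩ := hw
  exacts [le_rfl, (h.lt_of_mem_right ha).le]

open Classical in
lemma map_snd_siteSurvivors (h : IsLabelling π (U ++ c :: D)) :
    (siteSurvivors π c.1 D).map Prod.snd = c.2.survivors (D.map Prod.snd) := by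
  obtain ⟨v, ℓ⟩ := c
  have hlabel := h.isLabel (v, ℓ) (by simp)
  have hself : Survives π v v ↔ ℓ.Keeps π v v :=
    hlabel.survives_iff _ le_rfl (h.active_of_mem (a := (v, ℓ)) (by simp))
  have hbelow : ∀ a ∈ D, Survives π v a.1 ↔ ℓ.Keeps π v a.1 := fun a ha =>
    hlabel.survives_iff _ (h.lt_of_mem_right ha).le (h.active_of_mem (by simp [ha]))
  cases ℓ with
  | free b =>
    have hlow : ∀ a ∈ D, Survives π v a.1 ↔ a.2.low = true := fun a ha =>
      (hbelow a ha).trans (h.isLabel a (by simp [ha])).low_iff.symm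
    have hfree : Survives π v v ↔ b = true := hself.trans hlabel.low_iff.symm
    have hfilter : (D.filter fun a => Survives π v a.1) = D.filter fun a => a.2.low :=
      List.filter_congr fun a ha => by simp only [hlow a ha, Bool.decide_eq_true]
    cases b <;>
      simp [siteSurvivors, Label.survivors, List.filter_map, Function.comp_def, hfree, hfilter]
  | edge =>
    have hfilter : (D.filter fun a => Survives π v a.1) = [] :=
      List.filter_eq_nil_iff.2 fun a ha hs =>
        (h.lt_of_mem_right ha).ne ((hbelow a ha).1 (of_decide_eq_true hs))
    have hedge : Survives π v v := hself.2 rfl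
    simp [siteSurvivors, Label.survivors, List.filter_map, Function.comp_def, hedge, hfilter]
  | blocked b =>
    have hfilter : (D.filter fun a => Survives π v a.1) = [] :=
      List.filter_eq_nil_iff.2 fun a ha hs => (hbelow a ha).1 (of_decide_eq_true hs)
    have hblocked : ¬ Survives π v v := hself.1
    simp [siteSurvivors, Label.survivors, List.filter_map, Function.comp_def, hblocked, hfilter]

lemma map_snd_siteUpdate (h : IsLabelling π (U ++ c :: D)) :
    (siteUpdate π U c D).map Prod.snd = update (U.map Prod.snd) c.2 (D.map Prod.snd) := by
  simp [siteUpdate, update, ← h.map_snd_siteSurvivors, Function.comp_def]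

lemma siteUpdate_sorted (h : IsLabelling π (U ++ c :: D)) :
    ((siteUpdate π U c D).map Prod.fst).Pairwise (· > ·) := by
  have hsorted := h.sorted
  rw [List.map_append, List.map_cons, List.pairwise_append] at hsorted
  obtain ⟨hU, hD, hUD⟩ := hsorted
  rw [map_fst_siteUpdate, map_fst_siteSurvivors, List.pairwise_append, List.pairwise_map,
    List.pairwise_map]
  refine ⟨?_, (hD.filter _).imp Fin.castSucc_lt_castSucc_iff.2, ?_⟩
  · have hUc : (U.map Prod.fst ++ [c.1]).Pairwise (· > ·) :=
      List.pairwise_append.2 ⟨hU, List.pairwise_singleton _ _, fun a ha b hb =>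
        hUD a ha b (by simp_all)⟩
    exact hUc.imp Fin.succ_lt_succ_iff.2
  · simp only [List.forall_mem_map, List.forall_mem_filter]
    exact fun a ha b hb _ =>
      Fin.castSucc_lt_succ_iff.2 ((h.le_of_mem_right hb).trans (h.le_of_mem_left ha))

lemma active_iff_mem_left (h : IsLabelling π (U ++ c :: D)) {w : Fin (n + 1)} (hw : c.1 ≤ w) :
    Active π w ↔ w ∈ U.map Prod.fst ++ [c.1] := by
  have hD : w ∉ D.map Prod.fst := fun hmem => by
    obtain ⟨a, ha, rfl⟩ := List.mem_map.1 hmem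
    exact (h.lt_of_mem_right ha).not_ge hw
  simp only [h.active_iff, List.map_append, List.map_cons, List.mem_append, List.mem_cons, hD,
    List.not_mem_nil]

lemma active_iff_mem_right (h : IsLabelling π (U ++ c :: D)) {w : Fin (n + 1)} (hw : w ≤ c.1) :
    Active π w ↔ w ∈ c.1 :: D.map Prod.fst := by
  have hU : w ∉ U.map Prod.fst := fun hmem => by
    obtain ⟨a, ha, rfl⟩ := List.mem_map.1 hmem
    exact (h.lt_of_mem_left ha).not_ge hw
  simp only [h.active_iff, List.map_append, List.map_cons, List.mem_append, hU, false_or]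

lemma active_prepend_iff_mem_siteUpdate (h : IsLabelling π (U ++ c :: D)) (w : Fin (n + 2)) :
    Active (prepend c.1 π) w ↔ w ∈ (siteUpdate π U c D).map Prod.fst := by
  have hne {a b : Fin (n + 1)} (hab : b ≤ a) : b.castSucc ≠ a.succ :=
    (Fin.castSucc_lt_succ_iff.2 hab).ne
  rw [map_fst_siteUpdate, map_fst_siteSurvivors, List.mem_append, List.mem_map, List.mem_map]
  obtain ⟨u, hu, rfl⟩ | ⟨u, hu, rfl⟩ := succ_or_castSucc c.1 w
  · rw [active_prepend_succ π hu, h.active_iff_mem_left hu, or_iff_left]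
    · simp only [Fin.succ_inj, exists_eq_right]
    · rintro ⟨b, hb, hbu⟩
      exact hne ((h.le_of_mem_right (List.mem_of_mem_filter hb)).trans hu) hbu
  · rw [active_prepend_castSucc π hu, h.active_iff_mem_right hu, or_iff_right]
    · simp only [Fin.castSucc_inj, exists_eq_right, List.mem_filter, decide_eq_true_eq]
    · rintro ⟨a, ha, hau⟩
      exact hne (hu.trans (h.le_of_mem_left ha)) hau.symm

open Classical in
lemma isLabel_of_mem_siteUpdate (h : IsLabelling π (U ++ c :: D)) :
    ∀ a ∈ siteUpdate π U c D, IsLabel (prepend c.1 π) a.1 a.2 := by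
  have hc : Active π c.1 := h.active_of_mem (by simp)
  simp only [siteUpdate, siteSurvivors, List.forall_mem_append, List.forall_mem_cons,
    List.forall_mem_map, List.forall_mem_filter]
  refine ⟨fun a ha => (h.isLabel a (by simp [ha])).prepend_succ_of_lt (h.lt_of_mem_left ha) hc,
    (h.isLabel c (by simp)).prepend_succ_self hc, fun hs => ?_, fun a ha hs => ?_⟩
  · exact isLabel_prepend_castSucc_self (of_decide_eq_true hs)
  · exact isLabel_prepend_castSucc_of_lt (h.lt_of_mem_right ha) (of_decide_eq_true hs)

lemma step (h : IsLabelling π (U ++ c :: D)) :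
    IsLabelling (prepend c.1 π) (siteUpdate π U c D) :=
  ⟨h.siteUpdate_sorted, h.active_prepend_iff_mem_siteUpdate, h.isLabel_of_mem_siteUpdate⟩

end IsLabelling

end Labellings

section Counting

/-- The number of nodes at depth `m` below the node `a` in the tree generated by `children`. -/
def levelCount {α : Type*} (children : α → List α) : ℕ → α → ℕ
  | 0, _ => 1
  | m + 1, a => ((children a).map (levelCount children m)).sum

lemma levelCount_map {α β : Type*} {f : α → List α} {g : β → List β} (φ : α → β)
    (h : ∀ a, g (φ a) = (f a).map φ) (m : ℕ) (a : α) :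
    levelCount g m (φ a) = levelCount f m a := by
  induction m generalizing a with
  | zero => rfl
  | succ m ih => simp only [levelCount, h, List.map_map, Function.comp_def, ih]

lemma coeff_eq_levelCount {α R : Type*} [Semiring R] {children : α → List α} {G : α → R⟦X⟧}
    (hG : ∀ a, G a = 1 + X * ((children a).map G).sum) (m : ℕ) (a : α) :
    coeff m (G a) = levelCount children m a := by
  induction m generalizing a with
  | zero => simp [hG a, levelCount]
  | succ m ih =>
    simp [hG a, levelCount, coeff_succ_X_mul, coeff_one, map_list_sum, Nat.cast_list_sum,
      Function.comp_def, ih]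

open Classical in
/-- The number of avoiders obtained from the avoider `π` by prepending `m` entries. -/
noncomputable def extensionCount : ℕ → {n : ℕ} → Equiv.Perm (Fin n) → ℕ
  | 0, _, _ => 1
  | m + 1, _, π => ∑ v with Active π v, extensionCount m (prepend v π)

open Classical in
lemma sum_avoids_succ {M : Type*} [AddCommMonoid M] {n : ℕ}
    (f : Equiv.Perm (Fin (n + 1)) → M) :
    ∑ π with Avoids π, f π =
      ∑ π : Equiv.Perm (Fin n) with Avoids π, ∑ v with Active π v, f (prepend v π) := by
  rw [Finset.sum_filter, Finset.sum_filter,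
    ← prepend_bijective.sum_comp fun π => if Avoids π then f π else (0 : M),
    Fintype.sum_prod_type]
  refine Finset.sum_congr rfl fun π _ => ?_
  by_cases hπ : Avoids π <;> simp [avoids_prepend, hπ, Finset.sum_filter]

open Classical in
lemma card_avoids_eq_sum_extensionCount {n m N : ℕ} (h : N = n + m) :
    Finset.card {π : Equiv.Perm (Fin N) | Avoids π} =
      ∑ π : Equiv.Perm (Fin n) with Avoids π, extensionCount m π := by
  induction m generalizing n with
  | zero =>
    obtain rfl : N = n := h
    simp [extensionCount]
  | succ m ih =>
    rw [ih (by omega : N = (n + 1) + m), sum_avoids_succ]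
    rfl

lemma avoids_of_isEmpty (π : Equiv.Perm (Fin 0)) : Avoids π :=
  ⟨fun ⟨i, _⟩ => i.elim0, fun ⟨i, _⟩ => i.elim0⟩

open Classical in
lemma card_avoids (n : ℕ) :
    Finset.card {π : Equiv.Perm (Fin n) | Avoids π} =
      extensionCount n (1 : Equiv.Perm (Fin 0)) := by
  rw [card_avoids_eq_sum_extensionCount n.zero_add.symm]
  simp [avoids_of_isEmpty]

lemma avoiderCount_eq_extensionCount (n : ℕ) :
    avoiderCount {![0, 1, 3, 2], ![0, 2, 3, 1], ![2, 3, 0, 1]} n =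
      extensionCount n (1 : Equiv.Perm (Fin 0)) := by
  classical
  simp only [avoiderCount, ← avoids_iff, Nat.card_eq_fintype_card, Fintype.card_subtype,
    card_avoids]

/-- The words obtained from the word of labels `U ++ D` by applying the succession rule at each
letter of `D` in turn. -/
def children : List Label → List Label → List (List Label)
  | _, [] => []
  | U, c :: D => update U c D :: children (U ++ [c]) D

variable {n : ℕ} {π : Equiv.Perm (Fin n)}

lemma IsLabelling.sum_active {M : Type*} [AddCommMonoid M] [DecidablePred (Active π)]
    {l : List (Fin (n + 1) × Label)} (h : IsLabelling π l) (f : Fin (n + 1) → M) :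
    ∑ v with Active π v, f v = (l.map fun a => f a.1).sum := by
  have hnodup : (l.map Prod.fst).Nodup := h.sorted.imp ne_of_gt
  have hsites : ({v | Active π v} : Finset _) = (l.map Prod.fst).toFinset := by
    ext v
    simp only [Finset.mem_filter_univ, List.mem_toFinset, h.active_iff]
  rw [hsites, List.sum_toFinset _ hnodup, List.map_map]
  rfl

lemma IsLabelling.sum_map_prepend {f : List Label → ℕ} {g : Equiv.Perm (Fin (n + 1)) → ℕ}
    (hfg : ∀ ρ l, IsLabelling ρ l → g ρ = f (l.map Prod.snd)) {U D : List (Fin (n + 1) × Label)}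
    (h : IsLabelling π (U ++ D)) :
    (D.map fun c => g (prepend c.1 π)).sum =
      ((children (U.map Prod.snd) (D.map Prod.snd)).map f).sum := by
  induction D generalizing U with
  | nil => simp [children]
  | cons c D ih =>
    rw [List.map_cons, List.sum_cons, hfg _ _ h.step, h.map_snd_siteUpdate,
      ih (U := U ++ [c]) (by simpa using h)]
    simp [children]

lemma IsLabelling.extensionCount_eq {l : List (Fin (n + 1) × Label)} (h : IsLabelling π l) (m : ℕ) :
    extensionCount m π = levelCount (children []) m (l.map Prod.snd) := by
  induction m generalizing n π l with
  | zero => rfl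
  | succ m ih =>
    classical
    rw [extensionCount, h.sum_active fun v => extensionCount m (prepend v π),
      h.sum_map_prepend (U := []) (fun _ _ hl => ih hl)]
    rfl

lemma isLabelling_of_isEmpty (π : Equiv.Perm (Fin 0)) : IsLabelling π [(0, .free true)] where
  sorted := by simp
  active_iff w := by simp [Active, HasPeak, HasStraddle, Fin.eq_zero w]
  isLabel := List.forall_mem_singleton.2
    { low_iff := by simp [Label.low, HasAscent]
      survives_iff := by simp [Label.Keeps, Survives, HasAscent, HasInversion] }

lemma avoiderCount_eq_levelCount (n : ℕ) :
    avoiderCount {![0, 1, 3, 2], ![0, 2, 3, 1], ![2, 3, 0, 1]} n =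
      levelCount (children []) n [.free true] := by
  rw [avoiderCount_eq_extensionCount, (isLabelling_of_isEmpty 1).extensionCount_eq]
  rfl

end Counting

section Words

open Label

lemma children_replicate_append (U : List Label) (c : Label) (p : ℕ) (D : List Label) :
    children U (List.replicate p c ++ D) =
      (List.range p).map (fun i =>
        update (U ++ List.replicate i c) c (List.replicate (p - 1 - i) c ++ D)) ++
        children (U ++ List.replicate p c) D := by
  induction p generalizing U with
  | zero => simp
  | succ p ih =>
    have htail (i : ℕ) : p - 1 - i = p - (i + 1) := by omega
    simp [List.replicate_succ, children, ih, List.range_succ_eq_map, Function.comp_def, htail]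

lemma children_replicate (U : List Label) (c : Label) (p : ℕ) :
    children U (List.replicate p c) =
      (List.range p).map fun i =>
        update (U ++ List.replicate i c) c (List.replicate (p - 1 - i) c) := by
  simpa [children] using children_replicate_append U c p []

lemma replicate_append_cons {α : Type*} (p : ℕ) (a : α) (l : List α) :
    List.replicate p a ++ a :: l = a :: (List.replicate p a ++ l) := by
  rw [List.append_cons, ← List.replicate_succ', List.replicate_succ, List.cons_append]

/-- The four two-parameter families into which the words of the generating tree fall. -/
inductive State
  | edged (p s : ℕ)
  | lowTail (p s : ℕ)
  | mixedTail (p s : ℕ)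
  | highTail (p s : ℕ)

namespace State

/-- The word of labels denoted by a state. -/
def word : State → List Label
  | edged p s => .replicate p (free false) ++ free true :: edge :: .replicate s (blocked true)
  | lowTail p s => .replicate p (free false) ++ .replicate s (blocked true)
  | mixedTail p s =>
    .replicate p (free false) ++ (.replicate s (blocked false) ++ [blocked true])
  | highTail p s => .replicate p (free false) ++ .replicate s (blocked false)

/-- The succession rule on states. -/
def succession : State → List State
  | edged p s =>
    (List.range p).map (fun i => lowTail (i + 1) (s + 2)) ++ edged p (s + 1) :: edged (p + 1) 0 ::
      (List.range s).map fun j => mixedTail (p + 1) (j + 1)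
  | lowTail p s =>
    (List.range p).map (fun i => lowTail (i + 1) s) ++ (List.range s).map fun j => mixedTail p j
  | mixedTail p s =>
    (List.range p).map (fun i => lowTail (i + 1) 1) ++
      ((List.range s).map (fun j => highTail p (j + 1)) ++ [mixedTail p s])
  | highTail p s =>
    (List.range p).map (fun i => highTail (i + 1) 0) ++
      (List.range s).map fun j => highTail p (j + 1)

lemma children_word (S : State) : children [] S.word = S.succession.map word := by
  cases S <;> simp [word, succession, children_replicate_append, children_replicate, children,
    update, lift, split, survivors, low, replicate_append_cons, List.replicate_succ,
    List.filter_cons, List.filter_replicate, Function.comp_def]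

lemma levelCount_free_succ (n : ℕ) :
    levelCount (children []) (n + 1) [free true] = levelCount succession n (edged 0 0) := by
  rw [← levelCount_map word children_word]
  simp [levelCount, children, update, split, survivors, word]

end State

end Words

section Series

open State

/-- The series `1 / (1 - x)`. -/
noncomputable def y : ℚ⟦X⟧ := (1 - X)⁻¹

/-- The series `(1 - x) / (1 - 2x)`, the solution of `z = 1 + xyz`. -/
noncomputable def z : ℚ⟦X⟧ := (1 - X) * (1 - 2 * X)⁻¹

lemma y_mul : y * (1 - X) = 1 := PowerSeries.inv_mul_cancel _ (by simp)

lemma z_mul : z * (1 - 2 * X) = 1 - X := by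
  rw [z, mul_assoc, PowerSeries.inv_mul_cancel _ (by simp), mul_one]

lemma y_eq : y = 1 + X * y := by linear_combination y_mul

lemma z_eq : z = 1 + X * y * z := by
  linear_combination y * z_mul + (1 - z) * y_mul

lemma telescope_sum {R : Type*} [Semiring R] {f g : ℕ → R} {x : R}
    (h : ∀ j, f j + x * g j = f (j + 1)) (n : ℕ) :
    f 0 + x * ((List.range n).map g).sum = f n := by
  induction n with
  | zero => simp
  | succ n ih => rw [List.sum_range_succ, mul_add, ← add_assoc, ih, h]

/-- The coefficient of `z ^ p` in `series (edged p s)`, found by substituting a combination of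
`z ^ p`, `y ^ p` and `p * y ^ p` into the succession rule. -/
noncomputable def edgedZ : ℚ⟦X⟧ := (2 - 3 * X) * y * (1 - 3 * X)⁻¹

/-- The coefficient of `p * y ^ p` in `series (edged p s)`, found in the same way as `edgedZ`. -/
noncomputable def edgedPY : ℚ⟦X⟧ := -X * (1 - 3 * X) * y ^ 3 * z * (1 - 3 * X + X ^ 2)⁻¹

/-- The coefficient of `y ^ p` in `series (edged p s)`, found in the same way as `edgedZ`. -/
noncomputable def edgedY : ℚ⟦X⟧ :=
  -(2 - 8 * X + 7 * X ^ 2 - 2 * X ^ 3) * y * (1 - 3 * X + X ^ 2)⁻¹ ^ 2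

/-- The generating function of the subtree below a state, by depth. -/
noncomputable def series : State → ℚ⟦X⟧
  | highTail p s => y ^ (p + s)
  | mixedTail p s => y * (z ^ p + y ^ (p + s) - y ^ p)
  | lowTail p s =>
    y * (s : ℚ⟦X⟧) * z ^ p +
      (y ^ s - y * (s : ℚ⟦X⟧) + (p : ℚ⟦X⟧) * (X * y * (y ^ s - 1 - X * y * (s : ℚ⟦X⟧)))) * y ^ p
  | edged p s =>
    z ^ p * (edgedZ + y * z * (s : ℚ⟦X⟧)) +
      y ^ p * (edgedY - (y + X * y ^ 3) * (s : ℚ⟦X⟧) + y ^ 2 * z * y ^ s +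
        (p : ℚ⟦X⟧) * (edgedPY - X ^ 2 * y ^ 3 * (s : ℚ⟦X⟧) + X * y ^ 3 * z * y ^ s))

lemma sum_series_highTail_zero (p : ℕ) :
    1 + X * ((List.range p).map fun i => series (highTail (i + 1) 0)).sum = y ^ p :=
  telescope_sum (f := (y ^ ·)) (fun i => by simp only [series]; linear_combination -y ^ i * y_eq) p

lemma sum_series_highTail (p s : ℕ) :
    y ^ p + X * ((List.range s).map fun j => series (highTail p (j + 1))).sum = y ^ (p + s) :=
  telescope_sum (f := fun j => y ^ (p + j))
    (fun j => by simp only [series]; linear_combination -y ^ (p + j) * y_eq) s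

lemma sum_series_mixedTail (p q s : ℕ) :
    y ^ (p + q) + X * ((List.range s).map fun j => series (mixedTail p (j + q))).sum =
      y ^ (p + q + s) + (s : ℚ⟦X⟧) * (X * y * (z ^ p - y ^ p)) := by
  have h := telescope_sum (x := X) (g := fun j => series (mixedTail p (j + q)))
    (f := fun j => y ^ (p + q + j) + (j : ℚ⟦X⟧) * (X * y * (z ^ p - y ^ p))) (fun j => by
      simp only [series]
      push_cast
      linear_combination -y ^ (p + q + j) * y_eq) s
  simpa using h

lemma sum_series_lowTail (p s : ℕ) :
    1 + X * ((List.range p).map fun i => series (lowTail (i + 1) s)).sum =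
      (s : ℚ⟦X⟧) * z ^ p +
        (1 - (s : ℚ⟦X⟧) + (p : ℚ⟦X⟧) * (X * y * (y ^ s - 1 - X * y * (s : ℚ⟦X⟧)))) * y ^ p := by
  have h := telescope_sum (x := X) (g := fun i => series (lowTail (i + 1) s))
    (f := fun i => (s : ℚ⟦X⟧) * z ^ i +
      (1 - (s : ℚ⟦X⟧) + (i : ℚ⟦X⟧) * (X * y * (y ^ s - 1 - X * y * (s : ℚ⟦X⟧)))) * y ^ i)
    (fun i => by
      simp only [series]
      push_cast
      linear_combination -(s : ℚ⟦X⟧) * z ^ i * z_eq -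
        (1 - (s : ℚ⟦X⟧) + ((i : ℚ⟦X⟧) + 1) * (X * y * (y ^ s - 1 - X * y * (s : ℚ⟦X⟧)))) *
          y ^ i * y_eq - (s : ℚ⟦X⟧) * X * y * y ^ i * y_eq) p
  simpa using h

lemma one_sub_three_inv_mul : (1 - 3 * X)⁻¹ * (1 - 3 * X : ℚ⟦X⟧) = 1 :=
  PowerSeries.inv_mul_cancel _ (by simp)

lemma one_sub_three_add_sq_inv_mul : (1 - 3 * X + X ^ 2)⁻¹ * (1 - 3 * X + X ^ 2 : ℚ⟦X⟧) = 1 :=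
  PowerSeries.inv_mul_cancel _ (by simp)

lemma edgedZ_mul : edgedZ * ((1 - X) * (1 - 3 * X)) = 2 - 3 * X := by
  rw [edgedZ]
  linear_combination (2 - 3 * X) * (y_mul + y * (1 - X) * one_sub_three_inv_mul)

lemma edgedY_mul : edgedY * ((1 - X) * (1 - 3 * X + X ^ 2) ^ 2) =
    -(2 - 8 * X + 7 * X ^ 2 - 2 * X ^ 3) := by
  have hinv : (1 - 3 * X + X ^ 2)⁻¹ ^ 2 * (1 - 3 * X + X ^ 2 : ℚ⟦X⟧) ^ 2 = 1 := by
    rw [← mul_pow, one_sub_three_add_sq_inv_mul, one_pow]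
  rw [edgedY]
  linear_combination -(2 - 8 * X + 7 * X ^ 2 - 2 * X ^ 3) * (y_mul + y * (1 - X) * hinv)

lemma edgedZ_eq : edgedZ = 2 + X * y * z + X * edgedZ + X * z * edgedZ := by
  have := one_sub_three_inv_mul
  have := y_mul
  have := z_mul
  rw [edgedZ]
  grind

lemma edgedPY_eq : edgedPY * (1 - X - X * y) =
    -X * y - 2 * X ^ 2 * y ^ 2 - X ^ 3 * y ^ 3 + X ^ 2 * y ^ 4 * z := by
  have := one_sub_three_add_sq_inv_mul
  have := y_mul
  have := z_mul
  rw [edgedPY]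
  grind

lemma edgedY_eq : edgedY * (1 - X - X * y) =
    -1 - y ^ 2 - X * (y + X * y ^ 3) + X * y * (y ^ 2 * z + edgedPY + X * y ^ 3 * z) := by
  have := one_sub_three_add_sq_inv_mul
  have := y_mul
  have := z_mul
  rw [edgedY, edgedPY]
  grind

lemma series_highTail_eq (p s : ℕ) :
    series (highTail p s) = 1 + X * ((succession (highTail p s)).map series).sum := by
  simp only [succession, List.map_append, List.map_map, List.sum_append, Function.comp_def, mul_add]
  rw [← add_assoc, sum_series_highTail_zero, sum_series_highTail, series]

lemma series_mixedTail_eq (p s : ℕ) :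
    series (mixedTail p s) = 1 + X * ((succession (mixedTail p s)).map series).sum := by
  simp only [succession, List.map_append, List.map_map, List.map_cons, List.map_nil,
    List.sum_append, List.sum_cons, List.sum_nil, Function.comp_def, mul_add]
  have hlow := sum_series_lowTail p 1
  have hhigh := sum_series_highTail p s
  rw [series]
  push_cast at hlow
  linear_combination -hlow - hhigh + (z ^ p + y ^ (p + s) - y ^ p) * y_mul -
    (p : ℚ⟦X⟧) * X * y * y ^ p * y_mul

lemma series_lowTail_eq (p s : ℕ) :
    series (lowTail p s) = 1 + X * ((succession (lowTail p s)).map series).sum := by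
  simp only [succession, List.map_append, List.map_map, List.sum_append, Function.comp_def, mul_add]
  have hlow := sum_series_lowTail p s
  have hmixed := sum_series_mixedTail p 0 s
  simp only [add_zero] at hmixed
  rw [series]
  linear_combination -hlow - hmixed + (s : ℚ⟦X⟧) * (z ^ p - y ^ p) * y_eq

/-- Comparing coefficients of `zᵖ`, `yᵖ` and `p yᵖ` yields `edgedZ_eq`, `edgedY_eq` and
`edgedPY_eq`; the multiples of `s` and `yˢ` cancel by `y_eq` and `z_eq`. -/
lemma series_edged_eq (p s : ℕ) :
    series (edged p s) = 1 + X * ((succession (edged p s)).map series).sum := by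
  simp only [succession, List.map_append, List.map_map, List.map_cons, List.sum_append,
    List.sum_cons, Function.comp_def, mul_add]
  rw [eq_sub_of_add_eq' (sum_series_lowTail p (s + 2)),
    eq_sub_of_add_eq' (sum_series_mixedTail (p + 1) 1 s)]
  simp only [series]
  push_cast
  have hzs : y * z = 1 + 2 * X * y * z := by linear_combination y * z_mul + y_mul
  have hys : (y + X * y ^ 3) * (1 - X) = 1 + X * y ^ 2 := by
    linear_combination (1 + X * y ^ 2) * y_mul
  linear_combination z ^ p * edgedZ_eq + z ^ p * (s : ℚ⟦X⟧) * hzs +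
    y ^ p * (edgedY_eq - (s : ℚ⟦X⟧) * hys + y ^ s * y ^ 2 * z_eq +
      (p : ℚ⟦X⟧) * (edgedPY_eq - (s : ℚ⟦X⟧) * X ^ 2 * y ^ 2 * y_eq + y ^ s * X * y ^ 3 * z_eq))

theorem series_eq : ∀ S : State, series S = 1 + X * ((succession S).map series).sum
  | edged p s => series_edged_eq p s
  | lowTail p s => series_lowTail_eq p s
  | mixedTail p s => series_mixedTail_eq p s
  | highTail p s => series_highTail_eq p s

lemma denominator_mul_series : (1 - X) * (1 - 2 * X) * (1 - 3 * X) * (1 - 3 * X + X ^ 2) ^ 2 *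
    (1 + X * series (edged 0 0)) =
      1 - 11 * X + 48 * X ^ 2 - 104 * X ^ 3 + 115 * X ^ 4 - 61 * X ^ 5 + 13 * X ^ 6 := by
  have hyz : (1 - X) * (1 - 2 * X) * (y ^ 2 * z) = 1 := by
    linear_combination y ^ 2 * (1 - X) * z_mul + (y * (1 - X) + 1) * y_mul
  have hseries : series (edged 0 0) = edgedZ + edgedY + y ^ 2 * z := by
    simp [series, add_assoc]
  rw [hseries]
  linear_combination X * (1 - 2 * X) * (1 - 3 * X + X ^ 2) ^ 2 * edgedZ_mul +
    X * (1 - 2 * X) * (1 - 3 * X) * edgedY_mul + X * (1 - 3 * X) * (1 - 3 * X + X ^ 2) ^ 2 * hyz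

theorem avoiderGF_eq :
    avoiderGF {![0, 1, 3, 2], ![0, 2, 3, 1], ![2, 3, 0, 1]} = 1 + X * series (edged 0 0) := by
  ext n
  rw [avoiderGF, coeff_mk, avoiderCount_eq_levelCount]
  cases n with
  | zero => simp [levelCount]
  | succ n =>
    rw [levelCount_free_succ, map_add, coeff_succ_X_mul, coeff_eq_levelCount series_eq]
    simp [coeff_one]

end Series

end GeneratingTree

theorem statement_7 :
    ((1 : PowerSeries ℚ) - X) * (1 - 2*X) * (1 - 3*X) * (1 - 3*X + X^2)^2 * avoiderGF ({![0,1,3,2], ![0,2,3,1], ![2,3,0,1]} : Set (Fin 4 → Fin 4)) =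
      1 - 11*X + 48*X^2 - 104*X^3 + 115*X^4 - 61*X^5 + 13*X^6 := by
  rw [GeneratingTree.avoiderGF_eq]
  exact GeneratingTree.denominator_mul_series
end

section
/- Let T = {3412, 1423, 2341} (patterns of length 4). Then the generating function for T-avoiders satisfies, as formal power series over ℚ, (1-2x)·(1 - 6x + 12x^2 - 11x^3 + 3x^4)·F_T(x) = 1 - 7x + 18x^2 - 21x^3 + 11x^4; that is, F_T(x) = (1-7x+18x^2-21x^3+11x^4)/((1-2x)(1-6x+12x^2-11x^3+3x^4)). -/
open PowerSeries

/-!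
Build permutations by inserting the maximum. A site of an avoider is active when inserting the
maximum there gives an avoider again, so avoiders are the nodes of a generating tree whose
branching is by active sites. Which sites stay active after an insertion depends only on a few
thresholds between the active sites; recording these thresholds, together with the numbers of
active sites they separate, gives four families of labels with an explicit succession rule. The
generating functions of the families satisfy recurrences in the label parameters with geometric
and affine solutions, all affine in the series of two particular labels, and those two are
determined by a 2 × 2 linear system over `ℚ(x)`.
-/

/-- The order embedding of `ℕ` that omits the value `t`: where position `i` moves when a new entry
is inserted at site `t`. -/
def skipAt (t i : ℕ) : ℕ := if i < t then i else i + 1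

/-- Left inverse of `skipAt t`. Its value at `t`, the position of the new entry, is irrelevant. -/
def unskipAt (t i : ℕ) : ℕ := if i < t then i else i - 1

/-- The word obtained from a word `w` of length `n` on the letters `0, …, n - 1` by inserting the
new maximum `n` at site `t`. Words are total functions, of which only the values at positions below
the length matter. -/
def insertMax (t n : ℕ) (w : ℕ → ℕ) (i : ℕ) : ℕ :=
  if i = t then n else w (unskipAt t i)

/-- The first `n` values of `w` form a permutation of `0, …, n - 1`. -/
structure IsPermWord (n : ℕ) (w : ℕ → ℕ) : Prop where
  lt : ∀ i < n, w i < n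
  inj : ∀ i < n, ∀ j < n, w i = w j → i = j

/-- The first `n` values of `w` avoid the patterns 3412, 1423 and 2341, in this order. -/
def AvoidsTriple (n : ℕ) (w : ℕ → ℕ) : Prop :=
  ∀ i j k l, i < j → j < k → k < l → l < n →
    ¬ (w k < w l ∧ w l < w i ∧ w i < w j) ∧ ¬ (w i < w k ∧ w k < w l ∧ w l < w j) ∧
    ¬ (w l < w i ∧ w i < w j ∧ w j < w k)

/-- Site `s` (before position `s`) is active if inserting a new maximum there creates no forbidden
pattern: the two conditions exclude the maximum playing the 4 of 2341, and of 1423 or 3412. -/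
def Active (n : ℕ) (w : ℕ → ℕ) (s : ℕ) : Prop :=
  (∀ i j k, i < j → j < s → s ≤ k → k < n → ¬ (w k < w i ∧ w i < w j)) ∧
  ∀ i j k, i < s → s ≤ j → j < k → k < n →
    ¬ (w i < w j ∧ w j < w k) ∧ ¬ (w j < w k ∧ w k < w i)

/-- The condition under which an active site `s ≥ t`, shifted to `s + 1`, stays active after the
maximum is inserted at site `t`. -/
def KeepsRight (n : ℕ) (w : ℕ → ℕ) (t s : ℕ) : Prop :=
  (∀ i j, i < t → s ≤ j → j < n → w i < w j) ∧ ∀ i j, s ≤ i → i < j → j < n → w j < w i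

/-- The condition under which an active site `s ≤ t` stays active after the maximum is inserted at
site `t`. -/
def KeepsLeft (w : ℕ → ℕ) (t s : ℕ) : Prop :=
  ∀ i j, i < s → s ≤ j → j < t → w j < w i

section Insertion

variable {n t s u : ℕ} {w : ℕ → ℕ}

theorem insertMax_self (t n : ℕ) (w : ℕ → ℕ) : insertMax t n w t = n := if_pos rfl

theorem insertMax_skipAt (t n : ℕ) (w : ℕ → ℕ) (i : ℕ) : insertMax t n w (skipAt t i) = w i := by
  grind [insertMax, skipAt, unskipAt]

theorem isPermWord_insertMax (hw : IsPermWord n w) (ht : t ≤ n) :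
    IsPermWord (n + 1) (insertMax t n w) where
  lt i hi := by
    have hwi := hw.lt (unskipAt t i)
    grind [insertMax, unskipAt]
  inj i hi j hj hij := by
    have hwi := hw.lt (unskipAt t i)
    have hwj := hw.lt (unskipAt t j)
    have hinj := hw.inj (unskipAt t i)
    grind [insertMax, unskipAt]

theorem avoidsTriple_insertMax_iff (hw : IsPermWord n w) (ht : t ≤ n) :
    AvoidsTriple (n + 1) (insertMax t n w) ↔ AvoidsTriple n w ∧ Active n w t := by
  constructor
  · intro h
    refine ⟨fun i j k l hij hjk hkl hln ↦ ?_, fun i j k hij hjt htk hkn ↦ ?_,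
      fun i j k hit htj hjk hkn ↦ ?_⟩
    · specialize h (skipAt t i) (skipAt t j) (skipAt t k) (skipAt t l)
      grind [skipAt, insertMax_skipAt]
    · specialize h i j t (k + 1) hij hjt (by lia) (by lia)
      have hwj := hw.lt j
      grind [insertMax, unskipAt]
    · specialize h i t (j + 1) (k + 1) hit (by lia) (by lia) (by lia)
      have hwi := hw.lt i
      have hwk := hw.lt k
      grind [insertMax, unskipAt]
  · rintro ⟨h, hleft, hright⟩ i j k l hij hjk hkl hln
    specialize h (unskipAt t i) (unskipAt t j) (unskipAt t k) (unskipAt t l)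
    specialize hleft (unskipAt t i) (unskipAt t j) (unskipAt t l)
    specialize hright (unskipAt t i) (unskipAt t k) (unskipAt t l)
    have hwi := hw.lt (unskipAt t i)
    have hwj := hw.lt (unskipAt t j)
    have hwk := hw.lt (unskipAt t k)
    have hwl := hw.lt (unskipAt t l)
    clear hw
    grind (splits := 20) [insertMax, unskipAt]

theorem active_insertMax_of_le (hw : IsPermWord n w) (ht : t ≤ n) (hst : s ≤ t) :
    Active (n + 1) (insertMax t n w) s ↔ Active n w s ∧ KeepsLeft w t s := by
  constructor
  · rintro ⟨hleft, hright⟩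
    refine ⟨⟨fun i j k _ _ _ _ ↦ ?_, fun i j k _ _ _ _ ↦ ?_⟩, fun i j _ _ _ ↦ ?_⟩
    · specialize hleft (skipAt t i) (skipAt t j) (skipAt t k)
      grind [skipAt, insertMax_skipAt]
    · specialize hright (skipAt t i) (skipAt t j) (skipAt t k)
      grind [skipAt, insertMax_skipAt]
    · specialize hright (skipAt t i) (skipAt t j) t
      have hwj := hw.lt j
      have hinj := hw.inj i (by lia) j (by lia)
      grind [skipAt, insertMax_skipAt, insertMax_self]
  · rintro ⟨⟨hleft, hright⟩, hkeep⟩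
    refine ⟨fun i j k _ _ _ _ ↦ ?_, fun i j k _ _ _ _ ↦ ?_⟩
    · specialize hleft (unskipAt t i) (unskipAt t j) (unskipAt t k)
      have hwi := hw.lt (unskipAt t i)
      clear hright hkeep
      grind [insertMax, unskipAt]
    · specialize hright (unskipAt t i) (unskipAt t j) (unskipAt t k)
      specialize hkeep (unskipAt t i) (unskipAt t j)
      have hwi := hw.lt (unskipAt t i)
      have hwk := hw.lt (unskipAt t k)
      clear hleft
      grind [insertMax, unskipAt]

theorem active_insertMax_succ (hw : IsPermWord n w) (hts : t ≤ s) (hsn : s ≤ n) :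
    Active (n + 1) (insertMax t n w) (s + 1) ↔ Active n w s ∧ KeepsRight n w t s := by
  constructor
  · rintro ⟨hleft, hright⟩
    refine ⟨⟨fun i j k _ _ _ _ ↦ ?_, fun i j k _ _ _ _ ↦ ?_⟩,
      fun i j _ _ _ ↦ ?_, fun i j _ _ _ ↦ ?_⟩
    · specialize hleft (skipAt t i) (skipAt t j) (skipAt t k)
      grind [skipAt, insertMax_skipAt]
    · specialize hright (skipAt t i) (skipAt t j) (skipAt t k)
      grind [skipAt, insertMax_skipAt]
    · specialize hleft (skipAt t i) t (skipAt t j)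
      have hwi := hw.lt i
      have hinj := hw.inj i (by lia) j (by lia)
      grind [skipAt, insertMax_skipAt, insertMax_self]
    · specialize hright t (skipAt t i) (skipAt t j)
      have hwj := hw.lt j
      have hinj := hw.inj i (by lia) j (by lia)
      grind [skipAt, insertMax_skipAt, insertMax_self]
  · rintro ⟨⟨hleft, hright⟩, hlt, hgt⟩
    refine ⟨fun i j k _ _ _ _ ↦ ?_, fun i j k _ _ _ _ ↦ ?_⟩
    · specialize hleft (unskipAt t i) (unskipAt t j) (unskipAt t k)
      specialize hlt (unskipAt t i) (unskipAt t k)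
      have hwj := hw.lt (unskipAt t j)
      clear hgt hright
      grind [insertMax, unskipAt]
    · specialize hright (unskipAt t i) (unskipAt t j) (unskipAt t k)
      specialize hgt (unskipAt t j) (unskipAt t k)
      clear hlt hleft
      grind [insertMax, unskipAt]

theorem keepsRight_insertMax_self (hw : IsPermWord n w) (hut : u ≤ t) (ht : t ≤ n) :
    KeepsRight (n + 1) (insertMax t n w) u t ↔ KeepsRight n w u t := by
  constructor
  · rintro ⟨hlt, hgt⟩
    refine ⟨fun i j _ _ _ ↦ ?_, fun i j _ _ _ ↦ ?_⟩
    · specialize hlt (skipAt t i) (skipAt t j)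
      grind [skipAt, insertMax_skipAt]
    · specialize hgt (skipAt t i) (skipAt t j)
      grind [skipAt, insertMax_skipAt]
  · rintro ⟨hlt, hgt⟩
    refine ⟨fun i j _ _ _ ↦ ?_, fun i j _ _ _ ↦ ?_⟩
    · specialize hlt (unskipAt t i) (unskipAt t j)
      have hwi := hw.lt (unskipAt t i)
      grind [insertMax, unskipAt]
    · specialize hgt (unskipAt t i) (unskipAt t j)
      have hwj := hw.lt (unskipAt t j)
      grind [insertMax, unskipAt]

theorem keepsRight_insertMax_succ (hut : u ≤ t) (hts : t ≤ s) :
    KeepsRight (n + 1) (insertMax t n w) u (s + 1) ↔ KeepsRight n w u s := by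
  constructor
  · rintro ⟨hlt, hgt⟩
    refine ⟨fun i j _ _ _ ↦ ?_, fun i j _ _ _ ↦ ?_⟩
    · specialize hlt (skipAt t i) (skipAt t j)
      grind [skipAt, insertMax_skipAt]
    · specialize hgt (skipAt t i) (skipAt t j)
      grind [skipAt, insertMax_skipAt]
  · rintro ⟨hlt, hgt⟩
    refine ⟨fun i j _ _ _ ↦ ?_, fun i j _ _ _ ↦ ?_⟩
    · specialize hlt (unskipAt t i) (unskipAt t j)
      grind [insertMax, unskipAt]
    · specialize hgt (unskipAt t i) (unskipAt t j)
      grind [insertMax, unskipAt]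

theorem not_keepsRight_insertMax_of_site_lt (hw : IsPermWord n w) (ht : t ≤ n) (hst : s < t) :
    ¬ KeepsRight (n + 1) (insertMax t n w) u s := by
  rintro ⟨-, hgt⟩
  specialize hgt s t le_rfl hst (by lia)
  have hws := hw.lt s
  grind [insertMax, unskipAt]

theorem not_keepsRight_insertMax_of_lt (hw : IsPermWord n w) (htu : t < u) (hus : u ≤ s)
    (hs : s ≤ n) : ¬ KeepsRight (n + 1) (insertMax t n w) u s := by
  rintro ⟨hlt, -⟩
  specialize hlt t s htu le_rfl (by lia)
  have hws := hw.lt (s - 1)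
  grind [insertMax, unskipAt]

theorem keepsLeft_insertMax_of_le (hut : u ≤ t) :
    KeepsLeft (insertMax t n w) u s ↔ KeepsLeft w u s := by
  have hprefix : ∀ i < u, insertMax t n w i = w i := by grind [insertMax, unskipAt]
  grind [KeepsLeft]

theorem keepsLeft_insertMax_succ (hw : IsPermWord n w) (hts : t ≤ s) (hun : u ≤ n) :
    KeepsLeft (insertMax t n w) (u + 1) (s + 1) ↔ KeepsLeft w u s := by
  constructor
  · intro h i j _ _ _
    specialize h (skipAt t i) (skipAt t j)
    grind [skipAt, insertMax_skipAt]
  · intro h i j _ _ _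
    specialize h (unskipAt t i) (unskipAt t j)
    have hwj := hw.lt (unskipAt t j)
    grind [insertMax, unskipAt]

theorem not_keepsLeft_insertMax (hw : IsPermWord n w) (ht : t ≤ n) (hs : 0 < s) (hst : s ≤ t)
    (htu : t < u) : ¬ KeepsLeft (insertMax t n w) u s := by
  intro h
  specialize h 0 t hs hst htu
  have hw0 := hw.lt 0
  grind [insertMax, unskipAt]

theorem active_zero (n : ℕ) (w : ℕ → ℕ) : Active n w 0 := ⟨by lia, by lia⟩

theorem active_length (n : ℕ) (w : ℕ → ℕ) : Active n w n := ⟨by lia, by lia⟩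

theorem keepsRight_length (n : ℕ) (w : ℕ → ℕ) (t : ℕ) : KeepsRight n w t n := ⟨by lia, by lia⟩

theorem keepsLeft_zero (w : ℕ → ℕ) (t : ℕ) : KeepsLeft w t 0 := by
  unfold KeepsLeft
  lia

theorem keepsLeft_self (w : ℕ → ℕ) (t : ℕ) : KeepsLeft w t t := by
  unfold KeepsLeft
  lia

end Insertion

noncomputable instance (n : ℕ) (w : ℕ → ℕ) : DecidablePred (Active n w) := Classical.decPred _

/-- Thresholds describing how the active sites react to an insertion at an active site `u`: a site
`s ≥ u` other than the last survives iff `b ≤ s` and `u < p`, and a site `0 < s < u` survives iff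
`u < a`. -/
structure SiteProfile (n : ℕ) (w : ℕ → ℕ) (b p a : ℕ) : Prop where
  isPermWord : IsPermWord n w
  keepsRight_iff : ∀ u s, Active n w u → Active n w s → u ≤ s → s < n →
    (KeepsRight n w u s ↔ b ≤ s ∧ u < p)
  keepsLeft_iff : ∀ u s, Active n w u → Active n w s → 0 < s → s < u → u ≤ n →
    (KeepsLeft w u s ↔ u < a)

namespace SiteProfile

variable {n t s b p a b' p' a' : ℕ} {w : ℕ → ℕ}

theorem congr (h : SiteProfile n w b p a)
    (hright : ∀ u s, Active n w u → Active n w s → u ≤ s → s < n →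
      (b ≤ s ∧ u < p ↔ b' ≤ s ∧ u < p'))
    (hleft : ∀ u s, Active n w u → Active n w s → 0 < s → s < u → u ≤ n → (u < a ↔ u < a')) :
    SiteProfile n w b' p' a' where
  isPermWord := h.isPermWord
  keepsRight_iff u s hu hs hus hsn :=
    (h.keepsRight_iff u s hu hs hus hsn).trans (hright u s hu hs hus hsn)
  keepsLeft_iff u s hu hs hs0 hsu hun :=
    (h.keepsLeft_iff u s hu hs hs0 hsu hun).trans (hleft u s hu hs hs0 hsu hun)

theorem active_insertMax_of_le_iff (h : SiteProfile n w b p a) (ht : Active n w t) (htn : t ≤ n)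
    (hst : s ≤ t) :
    Active (n + 1) (insertMax t n w) s ↔ Active n w s ∧ (s = 0 ∨ s = t ∨ t < a) := by
  rw [active_insertMax_of_le h.isPermWord htn hst]
  refine and_congr_right fun hs ↦ ?_
  rcases Nat.eq_zero_or_pos s with rfl | hs0
  · simp [keepsLeft_zero]
  rcases hst.eq_or_lt with rfl | hst
  · simp [keepsLeft_self]
  rw [h.keepsLeft_iff t s ht hs hs0 hst htn]
  lia

theorem active_insertMax_succ_iff (h : SiteProfile n w b p a) (ht : Active n w t) (hts : t ≤ s)
    (hsn : s < n) :
    Active (n + 1) (insertMax t n w) (s + 1) ↔ Active n w s ∧ b ≤ s ∧ t < p := by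
  rw [active_insertMax_succ h.isPermWord hts hsn.le]
  exact and_congr_right fun hs ↦ h.keepsRight_iff t s ht hs hts hsn

theorem active_of_insertMax_succ (h : SiteProfile n w b p a) (hts : t ≤ s) (hsn : s ≤ n)
    (hs : Active (n + 1) (insertMax t n w) (s + 1)) : Active n w s :=
  ((active_insertMax_succ h.isPermWord hts hsn).1 hs).1

theorem insertMax_of_lt (h : SiteProfile n w b p a) (ht : Active n w t) (htn : t < n)
    (hba : t < p → 0 < b ∧ a ≤ b + 1) :
    SiteProfile (n + 1) (insertMax t n w) (if b ≤ t then t else b + 1) (min p (t + 1)) (t + 1) where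
  isPermWord := isPermWord_insertMax h.isPermWord htn.le
  keepsRight_iff u s hu hs hus hsn := by
    have hu' := h.active_insertMax_of_le_iff (s := u) ht htn.le
    rcases lt_trichotomy s t with hst | rfl | hts
    · have := not_keepsRight_insertMax_of_site_lt h.isPermWord (u := u) htn.le hst
      grind
    · rw [keepsRight_insertMax_self h.isPermWord hus htn.le]
      have := h.keepsRight_iff u s
      grind
    · obtain ⟨s, rfl⟩ : ∃ r, s = r + 1 := ⟨s - 1, by lia⟩
      have hs' := (h.active_insertMax_succ_iff ht (by lia) (by lia)).1 hs
      rcases le_or_gt u t with hut | htu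
      · rw [keepsRight_insertMax_succ hut (by lia)]
        have := h.keepsRight_iff u s
        grind
      · have := not_keepsRight_insertMax_of_lt h.isPermWord htu hus (by lia)
        grind
  keepsLeft_iff u s hu hs hs0 hsu hun := by
    rcases le_or_gt u t with hut | htu
    · rw [keepsLeft_insertMax_of_le hut]
      have := h.active_insertMax_of_le_iff (s := u) ht htn.le
      have := h.active_insertMax_of_le_iff (s := s) ht htn.le
      have := h.keepsLeft_iff u s
      grind
    rcases le_or_gt s t with hst | hts
    · have := not_keepsLeft_insertMax h.isPermWord htn.le hs0 hst htu
      grind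
    · obtain ⟨s, rfl⟩ : ∃ r, s = r + 1 := ⟨s - 1, by lia⟩
      obtain ⟨u, rfl⟩ : ∃ r, u = r + 1 := ⟨u - 1, by lia⟩
      rw [keepsLeft_insertMax_succ h.isPermWord (by lia) (by lia)]
      have hs' := (h.active_insertMax_succ_iff ht (by lia) (by lia)).1 hs
      have hu' := h.active_of_insertMax_succ (by lia) (by lia) hu
      rw [h.keepsLeft_iff u s hu' hs'.1 (by lia) (by lia) (by lia)]
      grind

theorem insertMax_length (h : SiteProfile n w b p a) :
    SiteProfile (n + 1) (insertMax n n w) n (n + 1) (n + 1) where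
  isPermWord := isPermWord_insertMax h.isPermWord le_rfl
  keepsRight_iff u s hu hs hus hsn := by
    rcases (Nat.lt_succ_iff.1 hsn).lt_or_eq with hsn | rfl
    · have := not_keepsRight_insertMax_of_site_lt h.isPermWord (u := u) le_rfl hsn
      grind
    · rw [keepsRight_insertMax_self h.isPermWord hus le_rfl]
      have := keepsRight_length s w u
      grind
  keepsLeft_iff u s hu hs hs0 hsu hun := by
    rcases hun.lt_or_eq with hun | rfl
    · rw [keepsLeft_insertMax_of_le (by lia)]
      have := h.active_insertMax_of_le_iff (s := u) (active_length n w) le_rfl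
      have := h.active_insertMax_of_le_iff (s := s) (active_length n w) le_rfl
      have := h.keepsLeft_iff u s
      grind
    · have := not_keepsLeft_insertMax h.isPermWord le_rfl hs0 (by lia) (Nat.lt_succ_self n)
      grind

end SiteProfile

section Counting

variable {P Q : ℕ → Prop} [DecidablePred P] [DecidablePred Q] {a b n : ℕ}

theorem count_congr (h : ∀ k < n, P k ↔ Q k) : Nat.count P n = Nat.count Q n := by
  simp only [Nat.count_eq_card_filter_range]
  exact congrArg _ (Finset.filter_congr fun k hk ↦ h k (Finset.mem_range.1 hk))

theorem count_eq_count_of_forall_not (hab : a ≤ b) (h : ∀ k, a ≤ k → k < b → ¬ P k) :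
    Nat.count P b = Nat.count P a := by
  obtain ⟨d, rfl⟩ := Nat.exists_eq_add_of_le hab
  rw [Nat.count_add, add_eq_left]
  exact Nat.count_of_forall_not fun k hk ↦ h _ (by lia) (by lia)

theorem count_succ_add_count (hab : a ≤ b) (h : ∀ k, a ≤ k → k < b → (P (k + 1) ↔ Q k)) :
    Nat.count P (b + 1) + Nat.count Q a = Nat.count P (a + 1) + Nat.count Q b := by
  induction b, hab using Nat.le_induction with
  | base => rfl
  | succ b hab ih =>
    have hb := h b hab (by lia)
    grind

theorem sum_ite_count {M : Type*} [AddCommMonoid M] (P : ℕ → Prop) [DecidablePred P] (f : ℕ → M)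
    (n : ℕ) :
    ∑ t ∈ Finset.range n, (if P t then f (Nat.count P t) else 0) =
      ∑ r ∈ Finset.range (Nat.count P n), f r := by
  induction n with
  | zero => simp
  | succ n ih =>
    rw [Finset.sum_range_succ, ih, Nat.count_succ]
    split_ifs
    · rw [Finset.sum_range_succ]
    · rw [add_zero, add_zero]

end Counting

/-- The labels of the generating tree; `HasLabel` says which words carry which label. -/
inductive Label where
  | split (i l : ℕ)
  | pivot (k l : ℕ)
  | narrow (j : ℕ)
  | decreasing (k : ℕ)

namespace Label

/-- The succession rule: the labels produced by inserting the maximum at the active sites, listed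
from left to right. -/
def children : Label → List Label
  | split i l => (List.range (i + 1)).map (split · l) ++ List.replicate l (split 0 1) ++ [pivot 0 0]
  | pivot k l => (List.range (k + 1)).map (split · (l + 1)) ++ [pivot k (l + 1)] ++
      List.replicate l (split 0 1) ++ [pivot 0 0]
  | narrow j => [split 0 1] ++ (List.range j).map (fun i ↦ split (i + 1) 0) ++ [narrow j, pivot 0 0]
  | decreasing k => [decreasing (k + 1)] ++ (List.range k).map narrow ++ [pivot k 0]

end Label

/-- The word `w` of length `n` carries the given label. The site `c` separates the active sites; the
parameters count the active sites on its two sides, without `c` itself and without the sites `0`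
and `n`, which are active in every word. A word labelled `decreasing` is decreasing and all
its sites are active. -/
def HasLabel (n : ℕ) (w : ℕ → ℕ) : Label → Prop
  | .split i l => ∃ c, 0 < c ∧ c ≤ n ∧ SiteProfile n w c c c ∧
      Nat.count (Active n w) c = i + 1 ∧ Nat.count (Active n w) n = i + 1 + l
  | .pivot k l => ∃ c, 0 < c ∧ c < n ∧ Active n w c ∧ SiteProfile n w c (c + 1) (c + 1) ∧
      Nat.count (Active n w) c = k + 1 ∧ Nat.count (Active n w) n = k + 2 + l
  | .narrow j => ∃ c, 0 < c ∧ c < n ∧ Active n w c ∧ SiteProfile n w c 1 (c + 1) ∧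
      Nat.count (Active n w) c = j + 1 ∧ Nat.count (Active n w) n = j + 2
  | .decreasing k => n = k + 1 ∧ (∀ s ≤ n, Active n w s) ∧ SiteProfile n w 0 1 (n + 1)

section Transitions

variable {n t b p a : ℕ} {w : ℕ → ℕ}

theorem SiteProfile.count_insertMax_of_le (h : SiteProfile n w b p a) (ht : Active n w t)
    (htn : t ≤ n) (hta : t < a) {m : ℕ} (hm : m ≤ t + 1) :
    Nat.count (Active (n + 1) (insertMax t n w)) m = Nat.count (Active n w) m :=
  count_congr fun s hs ↦ by
    rw [h.active_insertMax_of_le_iff ht htn (by lia)]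
    grind

theorem SiteProfile.hasLabel_split_of_lt (h : SiteProfile n w b p a) (ht : Active n w t)
    (htb : t < b) (htp : t < p) (hta : t < a) (hab : a ≤ b + 1) (hbn : b ≤ n) {l : ℕ}
    (hl : Nat.count (Active n w) n = Nat.count (Active n w) b + l) :
    HasLabel (n + 1) (insertMax t n w) (.split (Nat.count (Active n w) t) l) := by
  have hgap : ∀ s, t + 1 ≤ s → s < b + 1 → ¬ Active (n + 1) (insertMax t n w) s := by
    intro s hts hsb hs
    obtain ⟨s, rfl⟩ : ∃ r, s = r + 1 := ⟨s - 1, by lia⟩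
    have := (h.active_insertMax_succ_iff ht (by lia) (by lia)).1 hs
    lia
  have hlow : Nat.count (Active (n + 1) (insertMax t n w)) (b + 1) =
      Nat.count (Active n w) t + 1 := by
    rw [count_eq_count_of_forall_not (a := t + 1) (by lia) hgap,
      h.count_insertMax_of_le ht (by lia) hta le_rfl, Nat.count_succ, if_pos ht]
  refine ⟨b + 1, by lia, by lia, ?_, hlow, ?_⟩
  · refine (h.insertMax_of_lt ht (by lia) (by lia)).congr ?_ ?_
    · intro u s hu _ _ _
      grind
    · intro u s hu _ _ _ _
      have := hgap u
      grind
  · have := count_succ_add_count (P := Active (n + 1) (insertMax t n w)) (Q := Active n w)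
      hbn fun s hbs hsn ↦ by
        rw [h.active_insertMax_succ_iff ht (by lia) hsn]
        exact and_iff_left ⟨hbs, htp⟩
    lia

theorem SiteProfile.hasLabel_split_zero_right (h : SiteProfile n w b p a) (ht : Active n w t)
    (htn : t < n) (htb : t < b) (hpt : p ≤ t) (hta : t < a) :
    HasLabel (n + 1) (insertMax t n w) (.split (Nat.count (Active n w) t) 0) := by
  have hgap : ∀ s, t + 1 ≤ s → s < n + 1 → ¬ Active (n + 1) (insertMax t n w) s := by
    intro s hts hsn hs
    obtain ⟨s, rfl⟩ : ∃ r, s = r + 1 := ⟨s - 1, by lia⟩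
    have := (h.active_insertMax_succ_iff ht (by lia) (by lia)).1 hs
    lia
  have hlow : Nat.count (Active (n + 1) (insertMax t n w)) (t + 1) =
      Nat.count (Active n w) t + 1 := by
    rw [h.count_insertMax_of_le ht htn.le hta le_rfl, Nat.count_succ, if_pos ht]
  refine ⟨t + 1, by lia, by lia, ?_, hlow, ?_⟩
  · refine (h.insertMax_of_lt ht htn (by lia)).congr ?_ (by simp)
    intro u s _ hs hus hsn
    have := hgap s
    grind
  · rw [count_eq_count_of_forall_not (by lia) hgap, hlow, add_zero]

theorem SiteProfile.hasLabel_split_zero_one (h : SiteProfile n w b p a) (ht : Active n w t)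
    (htn : t < n) (hp : 0 < p) (hpt : p ≤ t) (hbt : b ≤ t) (hat : a ≤ t) :
    HasLabel (n + 1) (insertMax t n w) (.split 0 1) := by
  have hactive : ∀ s < n + 1, Active (n + 1) (insertMax t n w) s ↔ s = 0 ∨ s = t := by
    intro s hs
    rcases le_or_gt s t with hst | hts
    · rw [h.active_insertMax_of_le_iff ht htn.le hst]
      have := active_zero n w
      grind
    · obtain ⟨s, rfl⟩ : ∃ r, s = r + 1 := ⟨s - 1, by lia⟩
      rw [h.active_insertMax_succ_iff ht (by lia) (by lia)]
      lia
  have hcount : ∀ m ≤ n, Nat.count (Active (n + 1) (insertMax t n w)) (m + 1) =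
      if t ≤ m then 2 else 1 := by
    intro m hm
    induction m with
    | zero => grind
    | succ m ih => grind
  refine ⟨t, by lia, by lia, (h.insertMax_of_lt ht htn (by lia)).congr ?_ ?_, ?_, ?_⟩
  · intro u s hu _ hus hsn
    have := hactive u
    have := hactive s
    grind
  · intro u s _ hs hs0 hsu hun
    have := hactive s
    grind
  · obtain ⟨m, rfl⟩ : ∃ m, t = m + 1 := ⟨t - 1, by lia⟩
    grind
  · grind

theorem SiteProfile.hasLabel_pivot_self {c : ℕ} (h : SiteProfile n w c (c + 1) (c + 1))
    (hc : Active n w c) (hc0 : 0 < c) (hcn : c < n) {k l : ℕ}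
    (hk : Nat.count (Active n w) c = k + 1) (hl : Nat.count (Active n w) n = k + 2 + l) :
    HasLabel (n + 1) (insertMax c n w) (.pivot k (l + 1)) := by
  have hlow := fun m ↦ h.count_insertMax_of_le hc hcn.le c.lt_succ_self (m := m)
  have hhigh := count_succ_add_count (P := Active (n + 1) (insertMax c n w)) (Q := Active n w)
    hcn.le fun s hcs hsn ↦ by
      rw [h.active_insertMax_succ_iff hc hcs hsn]
      exact and_iff_left ⟨hcs, c.lt_succ_self⟩
  refine ⟨c, hc0, by lia, ?_, ?_, by rw [hlow c (by lia), hk], ?_⟩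
  · rw [h.active_insertMax_of_le_iff hc hcn.le le_rfl]
    exact ⟨hc, by simp⟩
  · simpa using h.insertMax_of_lt hc hcn fun _ ↦ ⟨hc0, le_rfl⟩
  · rw [hlow (c + 1) le_rfl, Nat.count_succ (Active n w), if_pos hc] at hhigh
    lia

theorem SiteProfile.hasLabel_narrow (h : SiteProfile n w b 1 a) (ht : Active n w t) (ht0 : 0 < t)
    (htn : t < n) (hbt : b ≤ t) (hta : t < a) {j : ℕ} (hj : Nat.count (Active n w) t = j + 1) :
    HasLabel (n + 1) (insertMax t n w) (.narrow j) := by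
  have hlow := fun m ↦ h.count_insertMax_of_le ht htn.le hta (m := m)
  have hgap : ∀ s, t + 1 ≤ s → s < n + 1 → ¬ Active (n + 1) (insertMax t n w) s := by
    intro s hts hsn hs
    obtain ⟨s, rfl⟩ : ∃ r, s = r + 1 := ⟨s - 1, by lia⟩
    have := (h.active_insertMax_succ_iff ht (by lia) (by lia)).1 hs
    lia
  refine ⟨t, ht0, by lia, ?_, ?_, by rw [hlow t (by lia), hj], ?_⟩
  · rw [h.active_insertMax_of_le_iff ht htn.le le_rfl]
    exact ⟨ht, by simp⟩
  · simpa [hbt] using h.insertMax_of_lt ht htn (by lia)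
  · rw [count_eq_count_of_forall_not (by lia) hgap, hlow _ le_rfl, Nat.count_succ, if_pos ht, hj]

theorem SiteProfile.hasLabel_pivot_length (h : SiteProfile n w b p a) (hn : 0 < n) {k : ℕ}
    (hk : Nat.count (Active (n + 1) (insertMax n n w)) n = k + 1) :
    HasLabel (n + 1) (insertMax n n w) (.pivot k 0) := by
  have hactive : Active (n + 1) (insertMax n n w) n := by
    rw [h.active_insertMax_of_le_iff (active_length _ w) le_rfl le_rfl]
    exact ⟨active_length n w, by simp⟩
  exact ⟨n, hn, n.lt_succ_self, hactive, h.insertMax_length, hk, by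
    rw [Nat.count_succ, hk, if_pos hactive]⟩

theorem SiteProfile.hasLabel_pivot_zero_zero (h : SiteProfile n w b p a) (hn : 0 < n)
    (han : a ≤ n) : HasLabel (n + 1) (insertMax n n w) (.pivot 0 0) := by
  refine h.hasLabel_pivot_length hn ?_
  rw [count_eq_count_of_forall_not (a := 1) hn, Nat.count_succ, if_pos (active_zero _ _),
    Nat.count_zero]
  intro s hs hsn
  rw [h.active_insertMax_of_le_iff (active_length _ w) le_rfl hsn.le]
  lia

theorem HasLabel.decreasing_succ {k : ℕ} (h : HasLabel n w (.decreasing k)) :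
    HasLabel (n + 1) (insertMax 0 n w) (.decreasing (k + 1)) := by
  obtain ⟨rfl, hactive, hprofile⟩ := h
  have hword := hprofile.isPermWord
  refine ⟨rfl, fun s hs ↦ ?_, isPermWord_insertMax hword (by lia), ?_, ?_⟩
  · rcases s with _ | s
    · exact active_zero _ _
    rcases (Nat.le_of_succ_le_succ hs).lt_or_eq with hs | rfl
    · rw [hprofile.active_insertMax_succ_iff (active_zero _ w) (by lia) hs]
      exact ⟨hactive s hs.le, by lia, one_pos⟩
    · exact active_length _ _
  · intro u s _ _ hus hsn
    rcases s with _ | s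
    · obtain rfl : u = 0 := by lia
      rw [keepsRight_insertMax_self hword le_rfl (by lia)]
      exact hprofile.keepsRight_iff 0 0 (active_zero _ w) (active_zero _ w) le_rfl (by lia)
    rcases Nat.eq_zero_or_pos u with rfl | hu
    · rw [keepsRight_insertMax_succ le_rfl (by lia),
        hprofile.keepsRight_iff 0 s (active_zero _ w) (hactive s (by lia)) (by lia) (by lia)]
      lia
    · have := not_keepsRight_insertMax_of_lt hword hu hus (by lia)
      grind
  · intro u s _ _ hs hsu hun
    obtain ⟨s, rfl⟩ : ∃ r, s = r + 1 := ⟨s - 1, by lia⟩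
    obtain ⟨u, rfl⟩ : ∃ r, u = r + 1 := ⟨u - 1, by lia⟩
    rw [keepsLeft_insertMax_succ hword (by lia) (by lia)]
    rcases Nat.eq_zero_or_pos s with rfl | hs
    · simpa [keepsLeft_zero] using hun
    · rw [hprofile.keepsLeft_iff u s (hactive u (by lia)) (hactive s (by lia)) hs (by lia) (by lia)]
      lia

theorem HasLabel.exists_child_split {i l : ℕ} (h : HasLabel n w (.split i l)) (ht : Active n w t)
    (htn : t ≤ n) : ∃ ℓ, (Label.split i l).children[Nat.count (Active n w) t]? = some ℓ ∧
      HasLabel (n + 1) (insertMax t n w) ℓ := by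
  obtain ⟨c, hc, hcn, h, hi, hl⟩ := h
  rcases htn.lt_or_eq with htn | rfl
  · have hrank := Nat.count_strict_mono ht htn
    rcases lt_or_ge t c with htc | hct
    · refine ⟨_, ?_, h.hasLabel_split_of_lt ht htc htc htc (by lia) hcn (l := l) (by lia)⟩
      have := Nat.count_strict_mono ht htc
      grind [Label.children]
    · refine ⟨_, ?_, h.hasLabel_split_zero_one ht htn hc hct hct hct⟩
      have := Nat.count_monotone (Active n w) hct
      grind [Label.children]
  · refine ⟨_, ?_, h.hasLabel_pivot_zero_zero (by lia) hcn⟩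
    grind [Label.children]

theorem HasLabel.exists_child_pivot {k l : ℕ} (h : HasLabel n w (.pivot k l)) (ht : Active n w t)
    (htn : t ≤ n) : ∃ ℓ, (Label.pivot k l).children[Nat.count (Active n w) t]? = some ℓ ∧
      HasLabel (n + 1) (insertMax t n w) ℓ := by
  obtain ⟨c, hc, hcn, hactive, h, hk, hl⟩ := h
  rcases htn.lt_or_eq with htn | rfl
  · have hrank := Nat.count_strict_mono ht htn
    rcases lt_trichotomy t c with htc | rfl | hct
    · refine ⟨_, ?_, h.hasLabel_split_of_lt ht htc (by lia) (by lia) le_rfl hcn.le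
        (l := l + 1) (by lia)⟩
      have := Nat.count_strict_mono ht htc
      grind [Label.children]
    · refine ⟨_, ?_, h.hasLabel_pivot_self ht hc hcn hk hl⟩
      grind [Label.children]
    · refine ⟨_, ?_, h.hasLabel_split_zero_one ht htn (by lia) hct hct.le hct⟩
      have := Nat.count_strict_mono hactive hct
      grind [Label.children]
  · refine ⟨_, ?_, h.hasLabel_pivot_zero_zero (by lia) hcn⟩
    grind [Label.children]

theorem HasLabel.exists_child_narrow {j : ℕ} (h : HasLabel n w (.narrow j)) (ht : Active n w t)
    (htn : t ≤ n) : ∃ ℓ, (Label.narrow j).children[Nat.count (Active n w) t]? = some ℓ ∧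
      HasLabel (n + 1) (insertMax t n w) ℓ := by
  obtain ⟨c, hc, hcn, hactive, h, hj, htotal⟩ := h
  rcases htn.lt_or_eq with htn | rfl
  · have hrank := Nat.count_strict_mono ht htn
    rcases lt_trichotomy t c with htc | rfl | hct
    · have := Nat.count_strict_mono ht htc
      rcases Nat.eq_zero_or_pos t with rfl | ht0
      · refine ⟨_, ?_, h.hasLabel_split_of_lt ht hc one_pos (by lia) le_rfl hcn.le (l := 1)
          (by lia)⟩
        grind [Label.children]
      · refine ⟨_, ?_, h.hasLabel_split_zero_right ht htn htc ht0 (by lia)⟩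
        have := Nat.count_strict_mono (active_zero n w) ht0
        grind [Label.children]
    · refine ⟨_, ?_, h.hasLabel_narrow ht hc hcn le_rfl (by lia) hj⟩
      grind [Label.children]
    · have := Nat.count_strict_mono hactive hct
      lia
  · refine ⟨_, ?_, h.hasLabel_pivot_zero_zero (by lia) hcn⟩
    grind [Label.children]

theorem HasLabel.exists_child_decreasing {k : ℕ} (h : HasLabel n w (.decreasing k)) (htn : t ≤ n) :
    ∃ ℓ, (Label.decreasing k).children[Nat.count (Active n w) t]? = some ℓ ∧
      HasLabel (n + 1) (insertMax t n w) ℓ := by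
  have hzero := h.decreasing_succ
  obtain ⟨rfl, hactive, h⟩ := h
  have hrank : ∀ m ≤ k + 1, Nat.count (Active (k + 1) w) m = m := fun m hm ↦
    Nat.count_of_forall fun s hs ↦ hactive s (by lia)
  rw [hrank t htn]
  rcases Nat.eq_zero_or_pos t with rfl | ht0
  · exact ⟨_, by grind [Label.children], hzero⟩
  rcases htn.lt_or_eq with htk | rfl
  · refine ⟨.narrow (t - 1), by grind [Label.children], ?_⟩
    exact h.hasLabel_narrow (hactive t htn) ht0 htk (by lia) (by lia) (by rw [hrank t htn]; lia)
  · refine ⟨_, by grind [Label.children], h.hasLabel_pivot_length (k := k) (by lia) ?_⟩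
    rw [h.count_insertMax_of_le (active_length _ w) le_rfl (by lia) (by lia), hrank _ le_rfl]

theorem HasLabel.exists_child {ℓ : Label} (h : HasLabel n w ℓ) (ht : Active n w t) (htn : t ≤ n) :
    ∃ ℓ', ℓ.children[Nat.count (Active n w) t]? = some ℓ' ∧
      HasLabel (n + 1) (insertMax t n w) ℓ' :=
  match ℓ with
  | .split _ _ => h.exists_child_split ht htn
  | .pivot _ _ => h.exists_child_pivot ht htn
  | .narrow _ => h.exists_child_narrow ht htn
  | .decreasing _ => h.exists_child_decreasing htn

theorem HasLabel.count_active {ℓ : Label} (h : HasLabel n w ℓ) :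
    Nat.count (Active n w) (n + 1) = ℓ.children.length := by
  rw [Nat.count_succ, if_pos (active_length n w)]
  cases ℓ with
  | decreasing k =>
    obtain ⟨rfl, hactive, -⟩ := h
    rw [Nat.count_of_forall fun s hs ↦ hactive s hs.le]
    grind [Label.children]
  | _ => grind [HasLabel, Label.children]

end Transitions

/-- `extensionCount m n w` is the number of ways to extend the word `w` of length `n` by `m`
successive insertions of a maximum at an active site. -/
noncomputable def extensionCount : ℕ → ℕ → (ℕ → ℕ) → ℕ
  | 0, _, _ => 1
  | m + 1, n, w => ∑ t ∈ Finset.range (n + 1),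
      if Active n w t then extensionCount m (n + 1) (insertMax t n w) else 0

/-- The number of descendants of a label after `m` generations of the succession rule. -/
def Label.descendantCount : ℕ → Label → ℕ
  | 0, _ => 1
  | m + 1, ℓ => (ℓ.children.map (descendantCount m)).sum

theorem sum_range_getElem?_map_getD {α M : Type*} [AddCommMonoid M] (L : List α) (f : α → M) :
    ∑ r ∈ Finset.range L.length, ((L[r]?).map f).getD 0 = (L.map f).sum := by
  rw [← Fin.sum_univ_fun_getElem, Finset.sum_range]
  simp

theorem HasLabel.extensionCount_eq {n : ℕ} {w : ℕ → ℕ} {ℓ : Label} (h : HasLabel n w ℓ) (m : ℕ) :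
    extensionCount m n w = ℓ.descendantCount m := by
  induction m generalizing n w ℓ with
  | zero => rfl
  | succ m ih =>
    rw [extensionCount, Label.descendantCount, ← sum_range_getElem?_map_getD, ← h.count_active,
      ← sum_ite_count]
    refine Finset.sum_congr rfl fun t htn ↦ ite_congr rfl (fun ht ↦ ?_) fun _ ↦ rfl
    obtain ⟨ℓ', hℓ', hlabel⟩ := h.exists_child ht (Nat.lt_succ_iff.1 (Finset.mem_range.1 htn))
    rw [ih hlabel, hℓ']
    rfl

section Permutations

variable {n : ℕ}

/-- The one-line notation of `π` as a total function on `ℕ`, padded with `0`. -/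
def word (π : Equiv.Perm (Fin n)) (i : ℕ) : ℕ := if h : i < n then π ⟨i, h⟩ else 0

theorem word_val (π : Equiv.Perm (Fin n)) (i : Fin n) : word π i = π i := by simp [word]

theorem isPermWord_word (π : Equiv.Perm (Fin n)) : IsPermWord n (word π) where
  lt i hi := by simp [word, hi]
  inj i hi j hj h := by simpa [word, hi, hj, Fin.val_inj] using h

/-- The permutation obtained from `π` by inserting the new maximum at position `t`. -/
def insertLast (t : Fin (n + 1)) (π : Equiv.Perm (Fin n)) : Equiv.Perm (Fin (n + 1)) :=
  (finSuccEquiv' t).trans (π.optionCongr.trans (finSuccEquiv' (Fin.last n)).symm)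

theorem insertLast_self (t : Fin (n + 1)) (π : Equiv.Perm (Fin n)) :
    insertLast t π t = Fin.last n := by
  simp [insertLast]

theorem insertLast_succAbove (t : Fin (n + 1)) (π : Equiv.Perm (Fin n)) (i : Fin n) :
    insertLast t π (t.succAbove i) = (π i).castSucc := by
  simp [insertLast]

theorem val_succAbove (t : Fin (n + 1)) (i : Fin n) : (t.succAbove i : ℕ) = skipAt t i := by
  grind [skipAt, Fin.succAbove]

theorem word_insertLast (t : Fin (n + 1)) (π : Equiv.Perm (Fin n)) :
    word (insertLast t π) = insertMax t n (word π) := by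
  funext i
  rcases lt_or_ge i (n + 1) with hi | hi
  · lift i to Fin (n + 1) using hi
    rw [word_val]
    rcases Fin.eq_self_or_eq_succAbove t i with rfl | ⟨i, rfl⟩
    · rw [insertLast_self, insertMax_self, Fin.val_last]
    · rw [insertLast_succAbove, val_succAbove, insertMax_skipAt, word_val, Fin.val_castSucc]
  · grind [word, insertMax, unskipAt]

theorem bijective_insertLast (n : ℕ) : Function.Bijective
    fun p : Fin (n + 1) × Equiv.Perm (Fin n) ↦ insertLast p.1 p.2 := by
  refine (Fintype.bijective_iff_injective_and_card _).2 ⟨?_, by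
    simp [Fintype.card_perm, Nat.factorial_succ]⟩
  rintro ⟨t, π⟩ ⟨t', π'⟩ (h : insertLast t π = insertLast t' π')
  obtain rfl : t = t' := (insertLast t' π').injective <| by
    rw [insertLast_self, ← h, insertLast_self]
  obtain rfl : π = π' := Equiv.ext fun i ↦ Fin.castSucc_injective n <| by
    rw [← insertLast_succAbove, h, insertLast_succAbove]
  rfl

noncomputable instance (n : ℕ) (w : ℕ → ℕ) : Decidable (AvoidsTriple n w) := Classical.dec _

/-- The number of `m`-fold extensions at active sites of all avoiders of length `n`. -/
noncomputable def avoiderExtensionCount (n m : ℕ) : ℕ :=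
  ∑ π : Equiv.Perm (Fin n), if AvoidsTriple n (word π) then extensionCount m n (word π) else 0

theorem avoiderExtensionCount_succ (n m : ℕ) :
    avoiderExtensionCount (n + 1) m = avoiderExtensionCount n (m + 1) := by
  unfold avoiderExtensionCount
  rw [← (bijective_insertLast n).sum_comp fun π ↦
    if AvoidsTriple (n + 1) (word π) then extensionCount m (n + 1) (word π) else 0,
    Fintype.sum_prod_type_right]
  refine Finset.sum_congr rfl fun π _ ↦ ?_
  simp only [word_insertLast, avoidsTriple_insertMax_iff (isPermWord_word π) (Fin.is_le _)]
  rw [extensionCount, Finset.sum_range]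
  split_ifs with hπ
  · simp only [hπ, true_and]
  · simp [hπ]

theorem avoiderExtensionCount_add (n m : ℕ) :
    avoiderExtensionCount (n + m) 0 = avoiderExtensionCount n m := by
  induction m generalizing n with
  | zero => rfl
  | succ m ih => rw [← avoiderExtensionCount_succ, ← ih, Nat.add_right_comm, add_assoc]

theorem containsPattern_iff_strictMono {k : ℕ} {σ τ : Fin k → Fin k}
    (hτσ : Function.LeftInverse τ σ) (hστ : Function.RightInverse τ σ) (π : Equiv.Perm (Fin n)) :
    ContainsPattern π σ ↔ ∃ f : Fin k ↪o Fin n, StrictMono fun a ↦ π (f (τ a)) := by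
  refine exists_congr fun f ↦ ⟨fun h a b hab ↦ ?_, fun h a b ↦ ?_⟩
  · rwa [← h, hστ, hστ]
  · rw [← h.lt_iff_lt, hτσ, hτσ]

theorem strictMono_fin_four_iff {α : Type*} [Preorder α] {f : Fin 4 → α} :
    StrictMono f ↔ f 0 < f 1 ∧ f 1 < f 2 ∧ f 2 < f 3 := by
  simp [Fin.strictMono_iff_lt_succ, Fin.forall_fin_succ]

theorem exists_orderEmbedding_fin_four {α : Type*} [Preorder α] {Q : (Fin 4 → α) → Prop} :
    (∃ f : Fin 4 ↪o α, Q f) ↔ ∃ i j k l, i < j ∧ j < k ∧ k < l ∧ Q ![i, j, k, l] := by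
  constructor
  · rintro ⟨f, hf⟩
    refine ⟨f 0, f 1, f 2, f 3, by simp, by simp, by simp, ?_⟩
    convert hf
    ext a
    fin_cases a <;> rfl
  · rintro ⟨i, j, k, l, hij, hjk, hkl, hQ⟩
    have hmono : StrictMono ![i, j, k, l] := strictMono_fin_four_iff.2 ⟨hij, hjk, hkl⟩
    exact ⟨OrderEmbedding.ofStrictMono _ hmono, hQ⟩

theorem containsPattern_iff_exists_lt {σ τ : Fin 4 → Fin 4} (hτσ : Function.LeftInverse τ σ)
    (hστ : Function.RightInverse τ σ) (π : Equiv.Perm (Fin n)) :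
    ContainsPattern π σ ↔ ∃ i j k l, i < j ∧ j < k ∧ k < l ∧
      π (![i, j, k, l] (τ 0)) < π (![i, j, k, l] (τ 1)) ∧
      π (![i, j, k, l] (τ 1)) < π (![i, j, k, l] (τ 2)) ∧
      π (![i, j, k, l] (τ 2)) < π (![i, j, k, l] (τ 3)) := by
  rw [containsPattern_iff_strictMono hτσ hστ,
    exists_orderEmbedding_fin_four (Q := fun f ↦ StrictMono fun a ↦ π (f (τ a)))]
  simp only [strictMono_fin_four_iff]

/-- The pattern set `{3412, 1423, 2341}` in zero-based one-line notation. -/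
def patternTriple : Set (Fin 4 → Fin 4) := {![2, 3, 0, 1], ![0, 3, 1, 2], ![1, 2, 3, 0]}

theorem avoidsTriple_word_iff (π : Equiv.Perm (Fin n)) :
    AvoidsTriple n (word π) ↔ ∀ i j k l, i < j → j < k → k < l →
      ¬ (π k < π l ∧ π l < π i ∧ π i < π j) ∧ ¬ (π i < π k ∧ π k < π l ∧ π l < π j) ∧
      ¬ (π l < π i ∧ π i < π j ∧ π j < π k) := by
  constructor
  · intro h i j k l hij hjk hkl
    simpa only [word_val, Fin.val_fin_lt] using h i j k l hij hjk hkl l.isLt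
  · intro h i j k l hij hjk hkl hln
    lift l to Fin n using hln
    lift k to Fin n using by lia
    lift j to Fin n using by lia
    lift i to Fin n using by lia
    simpa only [word_val, Fin.val_fin_lt] using h i j k l hij hjk hkl

theorem forall_not_containsPattern_patternTriple_iff (π : Equiv.Perm (Fin n)) :
    (∀ σ ∈ patternTriple, ¬ ContainsPattern π σ) ↔ AvoidsTriple n (word π) := by
  have h3412 : ContainsPattern π ![2, 3, 0, 1] ↔
      ∃ i j k l, i < j ∧ j < k ∧ k < l ∧ π k < π l ∧ π l < π i ∧ π i < π j :=
    containsPattern_iff_exists_lt (τ := ![2, 3, 0, 1]) (by decide) (by decide) π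
  have h1423 : ContainsPattern π ![0, 3, 1, 2] ↔
      ∃ i j k l, i < j ∧ j < k ∧ k < l ∧ π i < π k ∧ π k < π l ∧ π l < π j :=
    containsPattern_iff_exists_lt (τ := ![0, 2, 3, 1]) (by decide) (by decide) π
  have h2341 : ContainsPattern π ![1, 2, 3, 0] ↔
      ∃ i j k l, i < j ∧ j < k ∧ k < l ∧ π l < π i ∧ π i < π j ∧ π j < π k :=
    containsPattern_iff_exists_lt (τ := ![3, 0, 1, 2]) (by decide) (by decide) π
  simp only [patternTriple, Set.mem_insert_iff, Set.mem_singleton_iff, forall_eq_or_imp, forall_eq,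
    h3412, h1423, h2341, avoidsTriple_word_iff]
  grind

theorem avoiderCount_patternTriple (n : ℕ) :
    avoiderCount patternTriple n = avoiderExtensionCount n 0 := by
  classical
  unfold avoiderCount avoiderExtensionCount
  simp only [forall_not_containsPattern_patternTriple_iff, extensionCount]
  rw [Nat.card_eq_fintype_card, Fintype.card_subtype, Finset.card_filter]

theorem avoiderCount_patternTriple_zero : avoiderCount patternTriple 0 = 1 := by
  rw [avoiderCount_patternTriple]
  simp [avoiderExtensionCount, extensionCount, AvoidsTriple]

theorem hasLabel_one {w : ℕ → ℕ} (hw : IsPermWord 1 w) : HasLabel 1 w (.decreasing 0) := by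
  refine ⟨rfl, fun s hs ↦ ⟨by lia, by lia⟩, hw, fun u s _ _ hus hs ↦ ?_, by lia⟩
  exact iff_of_true ⟨by lia, by lia⟩ (by lia)

theorem avoiderCount_patternTriple_succ (m : ℕ) :
    avoiderCount patternTriple (m + 1) = (Label.decreasing 0).descendantCount m := by
  rw [avoiderCount_patternTriple, add_comm, avoiderExtensionCount_add, avoiderExtensionCount,
    Fintype.sum_unique, if_pos (show AvoidsTriple 1 _ from fun i j k l ↦ by lia)]
  exact (hasLabel_one (isPermWord_word _)).extensionCount_eq m

end Permutations

section Recurrences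

variable {R : Type*} [CommRing R]

theorem eq_mul_pow_of_eq_add_sum {x q α : R} (hq : (1 - x) * q = 1) {f : ℕ → R}
    (hf : ∀ i, f i = α + x * ∑ j ∈ Finset.range (i + 1), f j) (i : ℕ) : f i = α * q ^ (i + 1) := by
  induction i with
  | zero =>
    have hzero := hf 0
    rw [Finset.sum_range_one] at hzero
    linear_combination q * hzero - f 0 * hq
  | succ i ih =>
    have hsucc := hf (i + 1)
    rw [Finset.sum_range_succ] at hsucc
    linear_combination q * (hsucc - hf i) + q * ih - f (i + 1) * hq

theorem mul_sum_range_pow_succ {x q : R} (hq : (1 - x) * q = 1) (k : ℕ) :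
    x * ∑ i ∈ Finset.range k, q ^ (i + 1) = q ^ k - 1 := by
  induction k with
  | zero => simp
  | succ k ih =>
    rw [Finset.sum_range_succ]
    linear_combination ih - q ^ k * hq

theorem eq_of_forall_eq_add_X_mul_succ {f g w : ℕ → R⟦X⟧} (hf : ∀ k, f k = w k + X * f (k + 1))
    (hg : ∀ k, g k = w k + X * g (k + 1)) : f = g := by
  suffices h : ∀ m k, coeff m (f k) = coeff m (g k) from funext fun k ↦ ext fun m ↦ h m k
  intro m
  induction m with
  | zero => intro k; rw [hf, hg]; simp
  | succ m ih => intro k; rw [hf, hg]; simp [coeff_succ_X_mul, ih]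

theorem eq_of_forall_eq_affine_add_geometric {α β γ q r s : R⟦X⟧} (hq : (1 - X) * q = 1)
    (hs : (1 - X * r) * s = 1) {f : ℕ → R⟦X⟧}
    (hf : ∀ k : ℕ, f k = α + β * (k : R⟦X⟧) + γ * r ^ k + X * f (k + 1)) (k : ℕ) :
    f k = q * (α + X * q * β) + q * β * (k : R⟦X⟧) + s * γ * r ^ k := by
  refine congrFun (eq_of_forall_eq_add_X_mul_succ hf (g := fun k : ℕ ↦
    q * (α + X * q * β) + q * β * (k : R⟦X⟧) + s * γ * r ^ k) fun k ↦ ?_) k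
  push_cast
  linear_combination (α + X * q * β + β * (k : R⟦X⟧)) * hq + γ * r ^ k * hs

end Recurrences

/-- The generating function of the number of descendants of a label, by generation. -/
noncomputable def labelSeries (ℓ : Label) : ℚ⟦X⟧ := mk fun m ↦ (ℓ.descendantCount m : ℚ)

theorem mk_eq_one_add_X_mul {f : ℕ → ℚ} {g : ℚ⟦X⟧} (h0 : f 0 = 1)
    (h : ∀ m, f (m + 1) = coeff m g) : mk f = 1 + X * g := by
  ext m
  cases m with
  | zero => simp [h0]
  | succ m => simp [h, coeff_succ_X_mul, coeff_one]

theorem labelSeries_eq (ℓ : Label) :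
    labelSeries ℓ = 1 + X * (ℓ.children.map labelSeries).sum := by
  refine mk_eq_one_add_X_mul (by simp [Label.descendantCount]) fun m ↦ ?_
  rw [map_list_sum, Label.descendantCount, Nat.cast_list_sum]
  simp [labelSeries, Function.comp_def]

theorem sum_map_range_list {M : Type*} [AddCommMonoid M] (f : ℕ → M) (n : ℕ) :
    ((List.range n).map f).sum = ∑ i ∈ Finset.range n, f i := rfl

-- The series of every label is an explicit affine combination of these two.
local notation "𝐘" => labelSeries (Label.split 0 1)
local notation "𝐏" => (1 + X * labelSeries (Label.pivot 0 0))

section Solution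

variable {q : ℚ⟦X⟧}

theorem labelSeries_split (hq : (1 - X) * q = 1) (i l : ℕ) :
    labelSeries (.split i l) = (𝐏 + (l : ℚ⟦X⟧) * (X * 𝐘)) * q ^ (i + 1) := by
  refine eq_mul_pow_of_eq_add_sum hq (f := fun i ↦ labelSeries (.split i l)) (fun i ↦ ?_) i
  rw [labelSeries_eq (.split i l)]
  simp only [Label.children, List.map_append, List.map_map, List.sum_append, Function.comp_def,
    sum_map_range_list, List.map_replicate, List.sum_replicate, List.map_singleton,
    List.sum_singleton, nsmul_eq_mul]
  ring

theorem X_mul_sum_labelSeries_split (hq : (1 - X) * q = 1) (k l : ℕ) :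
    X * ∑ i ∈ Finset.range k, labelSeries (.split i l) =
      (𝐏 + (l : ℚ⟦X⟧) * (X * 𝐘)) * (q ^ k - 1) := by
  rw [Finset.sum_congr rfl fun i _ ↦ labelSeries_split hq i l, ← Finset.mul_sum]
  linear_combination (𝐏 + (l : ℚ⟦X⟧) * (X * 𝐘)) * mul_sum_range_pow_succ hq k

theorem labelSeries_pivot (hq : (1 - X) * q = 1) (k l : ℕ) :
    labelSeries (.pivot k l) = q * ((𝐏 + X * 𝐘) * q ^ (k + 1) - X * 𝐘 + X ^ 2 * 𝐘 * q ^ (k + 2)) +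
      X * 𝐘 * q ^ (k + 2) * (l : ℚ⟦X⟧) := by
  have hrec : ∀ l : ℕ, labelSeries (.pivot k l) = ((𝐏 + X * 𝐘) * q ^ (k + 1) - X * 𝐘) +
      X * 𝐘 * q ^ (k + 1) * (l : ℚ⟦X⟧) + 0 * 0 ^ l + X * labelSeries (.pivot k (l + 1)) := by
    intro l
    rw [labelSeries_eq (.pivot k l)]
    have hsum := X_mul_sum_labelSeries_split hq (k + 1) (l + 1)
    simp only [Label.children, List.map_append, List.map_map, List.sum_append, Function.comp_def,
      sum_map_range_list, List.map_replicate, List.sum_replicate, List.map_singleton,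
      List.sum_singleton, nsmul_eq_mul]
    push_cast at hsum
    linear_combination hsum
  linear_combination eq_of_forall_eq_affine_add_geometric hq (s := 1) (by ring) hrec l

theorem labelSeries_narrow (hq : (1 - X) * q = 1) (j : ℕ) :
    labelSeries (.narrow j) = q * (𝐏 + X * 𝐘 - 𝐏 * q) + q * 𝐏 * q ^ (j + 1) := by
  have hsplit (i : ℕ) : labelSeries (.split (i + 1) 0) = 𝐏 * q * q ^ (i + 1) := by
    rw [labelSeries_split hq]
    push_cast
    ring
  have hrec := labelSeries_eq (.narrow j)
  simp only [Label.children, List.map_append, List.map_map, List.sum_append, Function.comp_def,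
    sum_map_range_list, List.map_cons, List.map_nil, List.sum_cons, List.sum_nil, hsplit,
    ← Finset.mul_sum] at hrec
  linear_combination q * hrec + 𝐏 * q ^ 2 * mul_sum_range_pow_succ hq j -
    labelSeries (.narrow j) * hq

theorem labelSeries_decreasing (hq : (1 - X) * q = 1) {s : ℚ⟦X⟧} (hs : (1 - X * q) * s = 1) :
    labelSeries (.decreasing 0) =
      q * (1 - q * 𝐏 - X ^ 2 * q * 𝐘 + X ^ 2 * q ^ 2 * (𝐏 + X * 𝐘 - 𝐏 * q)) +
        s * (q * 𝐏 + X * q ^ 2 * (𝐏 + X * 𝐘) + X ^ 3 * q ^ 3 * 𝐘) := by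
  have hrec : ∀ k : ℕ, labelSeries (.decreasing k) = (1 - q * 𝐏 - X ^ 2 * q * 𝐘) +
      X * q * (𝐏 + X * 𝐘 - 𝐏 * q) * (k : ℚ⟦X⟧) +
      (q * 𝐏 + X * q ^ 2 * (𝐏 + X * 𝐘) + X ^ 3 * q ^ 3 * 𝐘) * q ^ k +
      X * labelSeries (.decreasing (k + 1)) := by
    intro k
    rw [labelSeries_eq (.decreasing k)]
    simp only [Label.children, List.map_append, List.map_map, List.sum_append, Function.comp_def,
      sum_map_range_list, List.map_singleton, List.sum_singleton, labelSeries_narrow hq,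
      labelSeries_pivot hq k 0, Finset.sum_add_distrib, Finset.sum_const, Finset.card_range,
      ← Finset.mul_sum, nsmul_eq_mul]
    push_cast
    linear_combination q * 𝐏 * mul_sum_range_pow_succ hq k
  linear_combination eq_of_forall_eq_affine_add_geometric hq hs hrec 0

theorem one_sub_two_X_mul_labelSeries_split (hq : (1 - X) * q = 1) : (1 - 2 * X) * 𝐘 = 𝐏 := by
  have hsplit := labelSeries_split hq 0 1
  push_cast at hsplit
  linear_combination (1 - X) * hsplit + (𝐏 + X * 𝐘) * hq

theorem kernel_mul_labelSeries_split (hq : (1 - X) * q = 1) :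
    (1 - 6 * X + 12 * X ^ 2 - 11 * X ^ 3 + 3 * X ^ 4) * 𝐘 = (1 - X) ^ 3 := by
  have hP := one_sub_two_X_mul_labelSeries_split hq
  have hpivot := labelSeries_pivot hq 0 0
  push_cast at hpivot
  have hclear : (1 - X) ^ 3 * labelSeries (.pivot 0 0) =
      (1 - X) * (𝐏 + X * 𝐘) - (1 - X) ^ 2 * (X * 𝐘) + X ^ 2 * 𝐘 := by
    linear_combination (1 - X) ^ 3 * hpivot +
      ((1 - X) * (𝐏 + X * 𝐘) * ((1 - X) * q + 1) - (1 - X) ^ 2 * (X * 𝐘) +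
        X ^ 2 * 𝐘 * (((1 - X) * q) ^ 2 + (1 - X) * q + 1)) * hq
  linear_combination (1 - X) ^ 3 * hP + X * hclear - X * (1 - X) * hP

end Solution

theorem kernel_mul_one_add_mul {R : Type*} [CommRing R] {x q s y P d : R} (hq : (1 - x) * q = 1)
    (hs : (1 - x * q) * s = 1) (hP : (1 - 2 * x) * y = P)
    (hy : (1 - 6 * x + 12 * x ^ 2 - 11 * x ^ 3 + 3 * x ^ 4) * y = (1 - x) ^ 3)
    (hd : d = q * (1 - q * P - x ^ 2 * q * y + x ^ 2 * q ^ 2 * (P + x * y - P * q)) +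
      s * (q * P + x * q ^ 2 * (P + x * y) + x ^ 3 * q ^ 3 * y)) :
    (1 - 2 * x) * (1 - 6 * x + 12 * x ^ 2 - 11 * x ^ 3 + 3 * x ^ 4) * (1 + x * d) =
      1 - 7 * x + 18 * x ^ 2 - 21 * x ^ 3 + 11 * x ^ 4 := by
  set K := 1 - 6 * x + 12 * x ^ 2 - 11 * x ^ 3 + 3 * x ^ 4 with hK
  have hs' : (1 - 2 * x) * s = 1 - x := by linear_combination (1 - x) * hs + x * s * hq
  have hqy : K * (q * y) = (1 - x) ^ 2 := by linear_combination q * hy + (1 - x) ^ 2 * hq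
  have hqqy : K * (q ^ 2 * y) = 1 - x := by linear_combination q * hqy + (1 - x) * hq
  have hqqqy : K * (q ^ 3 * y) = 1 := by linear_combination q * hqqy + hq
  have hpoly : K * (1 - q * P - x ^ 2 * q * y + x ^ 2 * q ^ 2 * (P + x * y - P * q)) =
      -x * (1 - x) * (2 - 4 * x + 3 * x ^ 2) := by
    rw [← hP]
    linear_combination (-(1 - 2 * x) - x ^ 2) * hqy + x ^ 2 * (1 - x) * hqqy -
      x ^ 2 * (1 - 2 * x) * hqqqy + hK
  have hgeom : K * (q * P + x * q ^ 2 * (P + x * y) + x ^ 3 * q ^ 3 * y) = (1 - x) ^ 3 + x ^ 3 := by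
    rw [← hP]
    linear_combination (1 - 2 * x) * hqy + x * (1 - x) * hqqy + x ^ 3 * hqqqy
  rw [hd]
  linear_combination x * (1 - 2 * x) * q * hpoly +
    x * (1 - 2 * x) * s * hgeom + x * ((1 - x) ^ 3 + x ^ 3) * hs' -
    x ^ 2 * (1 - 2 * x) * (2 - 4 * x + 3 * x ^ 2) * hq + (1 - 2 * x) * hK

theorem avoiderGF_patternTriple : avoiderGF patternTriple = 1 + X * labelSeries (.decreasing 0) :=
  mk_eq_one_add_X_mul (by simp [avoiderCount_patternTriple_zero]) fun m ↦ by
    simp [avoiderCount_patternTriple_succ, labelSeries]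

theorem statement_8 :
    ((1 : PowerSeries ℚ) - 2*X) * (1 - 6*X + 12*X^2 - 11*X^3 + 3*X^4) * avoiderGF ({![2,3,0,1], ![0,3,1,2], ![1,2,3,0]} : Set (Fin 4 → Fin 4)) =
      1 - 7*X + 18*X^2 - 21*X^3 + 11*X^4 := by
  have hq : (1 - X : ℚ⟦X⟧) * (1 - X)⁻¹ = 1 := PowerSeries.mul_inv_cancel _ (by simp)
  have hs : (1 - X * (1 - X)⁻¹ : ℚ⟦X⟧) * (1 - X * (1 - X)⁻¹)⁻¹ = 1 :=
    PowerSeries.mul_inv_cancel _ (by simp)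
  refine (congrArg _ avoiderGF_patternTriple).trans ?_
  exact kernel_mul_one_add_mul hq hs (one_sub_two_X_mul_labelSeries_split hq)
    (kernel_mul_labelSeries_split hq) (labelSeries_decreasing hq hs)
end
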